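/- arXiv:math/9911142 — 8 statements merged into one kernel-verified Lean document; each statement's English description precedes it below -/
import Mathlib

section
/- If a ∈ L_p, then there exists u ∈ K_p with a ∼₁ u; explicitly, a*a is invertible in pAp, and if c denotes the inverse of (a*a)^{1/2} in pAp, then u = ac belongs to K_p and a ∼₁ u. -/
/-!
If `b * a = p`, then `p = star a * (star b * b) * a ≤ ‖star b * b‖ • (star a * a)`, so adding
`1 - p` to this multiple of `star a * a` gives an element above `1`, which is therefore invertible;
compressing its inverse to the corner inverts the multiple of `star a * a` there. This takes
place in the unitization, where `p` cuts out the same corner.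

If `c` inverts `s = (star a * a)^{1/2}` in the corner, then
`star (a * c) * (a * c) = star (s * c) * (s * c) = star p * p = p`.
-/

section Definitions

variable {S : Type*} [Mul S]

/-- The element `k` lies in the corner `pSp` and is a two-sided inverse of `x` relative to `p`.
When `x` is in `pSp` this is inversion in the corner; membership of `x` is not part of the
definition, so `x` may be, say, a square root not yet known to lie in the corner. -/
def IsCornerInverse (p x k : S) : Prop :=
  k = p * k * p ∧ x * k = p ∧ k * x = p

/-- The set `L_p` of elements `a` supported on `p` from the right that are left invertible
relative to `p`. -/
def leftInvertiblesAt (p : S) : Set S :=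
  {a | a = a * p ∧ ∃ b, b = p * b ∧ b * a = p}

/-- The set `K_p` of partial isometries with initial projection `p`. -/
def partialIsometriesAt [Star S] (p : S) : Set S :=
  {v | v = v * p ∧ star v * v = p}

/-- The relation `a ∼₁ a'`: some invertible element of the corner `pSp` carries `a` to `a'` by
right multiplication. -/
def CornerEquiv (p a a' : S) : Prop :=
  ∃ h, h = p * h * p ∧ (∃ k, IsCornerInverse p h k) ∧ a * h = a'

end Definitions

section Semigroup

variable {S : Type*} [Semigroup S] {p x k : S}

theorem mul_mul_eq_compress_of_isIdempotentElem (hp : IsIdempotentElem p) (x : S) :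
    p * x * p = p * (p * x * p) * p := by
  simp only [mul_assoc, hp.eq, hp.mul_self_mul]

namespace IsCornerInverse

theorem mul_right_eq (hp : IsIdempotentElem p) (hk : IsCornerInverse p x k) : k * p = k := by
  rw [hk.1, mul_assoc, hp.eq]

theorem mul_left_eq (hp : IsIdempotentElem p) (hk : IsCornerInverse p x k) : p * k = k := by
  rw [hk.1, ← mul_assoc, ← mul_assoc, hp.eq]

theorem symm_compress (hp : IsIdempotentElem p) (hk : IsCornerInverse p x k) :
    IsCornerInverse p k (p * x * p) := by
  refine ⟨mul_mul_eq_compress_of_isIdempotentElem hp x, ?_, ?_⟩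
  · rw [← mul_assoc, ← mul_assoc, hk.mul_right_eq hp, hk.2.2, hp.eq]
  · rw [mul_assoc, hk.mul_left_eq hp, mul_assoc, hk.2.1, hp.eq]

theorem cornerEquiv_mul (hp : IsIdempotentElem p) (hk : IsCornerInverse p x k) (a : S) :
    CornerEquiv p a (a * k) :=
  ⟨k, hk.1, ⟨p * x * p, hk.symm_compress hp⟩, rfl⟩

theorem mul_mem_partialIsometriesAt [StarMul S] {a s c : S} (hp : IsStarProjection p)
    (hs : IsSelfAdjoint s) (hsa : s * s = star a * a) (hc : IsCornerInverse p s c) :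
    a * c ∈ partialIsometriesAt p := by
  refine ⟨by rw [mul_assoc, hc.mul_right_eq hp.isIdempotentElem], ?_⟩
  calc star (a * c) * (a * c) = star c * (star a * a) * c := by simp only [star_mul, mul_assoc]
    _ = star (s * c) * (s * c) := by simp only [← hsa, star_mul, hs.star_eq, mul_assoc]
    _ = p := by rw [hc.2.1, hp.isSelfAdjoint.star_eq, hp.isIdempotentElem.eq]

end IsCornerInverse

end Semigroup

theorem IsCornerInverse.of_smul_left {R S : Type*} [Mul S] [SMul R S] [IsScalarTower R S S]
    [SMulCommClass R S S] {p x k : S} {r : R} (hk : IsCornerInverse p (r • x) k) :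
    IsCornerInverse p x (r • k) := by
  obtain ⟨hkp, hxk, hkx⟩ := hk
  refine ⟨?_, ?_, ?_⟩
  · rw [mul_smul_comm, smul_mul_assoc, ← hkp]
  · rw [mul_smul_comm, ← smul_mul_assoc, hxk]
  · rw [smul_mul_assoc, ← mul_smul_comm, hkx]

theorem isCornerInverse_compress_inv {R : Type*} [Ring R] {p x : R} (hp : IsIdempotentElem p)
    (hpx : p * x = x) (hxp : x * p = x) (u : Rˣ) (hu : (u : R) = x + (1 - p)) :
    IsCornerInverse p x (p * ↑u⁻¹ * p) := by
  have hpu : p * u = x := by rw [hu, mul_add, hpx, hp.mul_one_sub_self, add_zero]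
  have hup : u * p = x := by rw [hu, add_mul, hxp, hp.one_sub_mul_self, add_zero]
  refine ⟨mul_mul_eq_compress_of_isIdempotentElem hp _, ?_, ?_⟩
  · calc x * (p * ↑u⁻¹ * p) = x * ↑u⁻¹ * p := by rw [← mul_assoc, ← mul_assoc, hxp]
      _ = p := by rw [← hpu, Units.mul_inv_cancel_right, hp.eq]
  · calc p * ↑u⁻¹ * p * x = p * (↑u⁻¹ * x) := by rw [mul_assoc, hpx, mul_assoc]
      _ = p := by rw [← hup, Units.inv_mul_cancel_left, hp.eq]

theorem IsCornerInverse.exists_of_inr {R A : Type*} [MulZeroClass R] [AddZeroClass A] [Mul A]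
    [SMulWithZero R A] {p x : A} {k : Unitization R A}
    (hk : IsCornerInverse (p : Unitization R A) x k) : ∃ k : A, IsCornerInverse p x k := by
  obtain ⟨hkp, hxk, hkx⟩ := hk
  have fst_eq_zero : k.fst = 0 := by
    simpa only [Unitization.fst_mul, Unitization.fst_inr, mul_zero] using congrArg (·.fst) hkp
  lift k to A using fst_eq_zero
  exact ⟨k, by exact_mod_cast hkp, by exact_mod_cast hxk, by exact_mod_cast hkx⟩

section CStarAlgebra

variable {A : Type*} [NonUnitalCStarAlgebra A] [PartialOrder A] [StarOrderedRing A] {p x a b : A}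

theorem isUnit_inr_add_one_sub_inr_of_le (hp : IsStarProjection p) (hle : p ≤ x) :
    IsUnit ((x : Unitization ℂ A) + (1 - p)) := by
  have hx : IsSelfAdjoint x := .of_nonneg (hp.nonneg.trans hle)
  have inr_le : (p : Unitization ℂ A) ≤ x :=
    (Unitization.inr_le_iff p x hp.isSelfAdjoint hx).mpr hle
  have one_le : 1 ≤ (x : Unitization ℂ A) + (1 - p) := by
    simpa only [add_sub_cancel] using add_le_add_left inr_le (1 - (p : Unitization ℂ A))
  exact CStarAlgebra.isUnit_of_le 1 one_le isStrictlyPositive_one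

theorem exists_isCornerInverse_of_le (hp : IsStarProjection p) (hxp : x * p = x) (hle : p ≤ x) :
    ∃ k, IsCornerInverse p x k := by
  have hpx : p * x = x := by
    have hx : IsSelfAdjoint x := .of_nonneg (hp.nonneg.trans hle)
    simpa only [star_mul, hp.isSelfAdjoint.star_eq, hx.star_eq] using congrArg star hxp
  obtain ⟨u, hu⟩ := isUnit_inr_add_one_sub_inr_of_le hp hle
  refine (isCornerInverse_compress_inv ?_ ?_ ?_ u hu).exists_of_inr
  · exact hp.isIdempotentElem.map (Unitization.inrNonUnitalStarAlgHom ℂ A)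
  · exact_mod_cast congrArg (Unitization.inr (R := ℂ)) hpx
  · exact_mod_cast congrArg (Unitization.inr (R := ℂ)) hxp

theorem le_norm_smul_star_mul_self_of_mul_eq (hp : IsStarProjection p) (hba : b * a = p) :
    p ≤ ‖star b * b‖ • (star a * a) := by
  calc p = star (b * a) * (b * a) := by
        rw [hba, hp.isSelfAdjoint.star_eq, hp.isIdempotentElem.eq]
    _ = star a * (star b * b) * a := by simp only [star_mul, mul_assoc]
    _ ≤ ‖star b * b‖ • (star a * a) :=
        CStarAlgebra.star_left_conjugate_le_norm_smul (.star_mul_self b)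

theorem exists_isCornerInverse_star_mul_self (hp : IsStarProjection p) (hap : a * p = a)
    (hba : b * a = p) : ∃ k, IsCornerInverse p (star a * a) k := by
  obtain ⟨k, hk⟩ := exists_isCornerInverse_of_le hp (by rw [smul_mul_assoc, mul_assoc, hap])
    (le_norm_smul_star_mul_self_of_mul_eq hp hba)
  exact ⟨‖star b * b‖ • k, hk.of_smul_left⟩

end CStarAlgebra

theorem stmt_1_general {A : Type*} [NonUnitalCStarAlgebra A] [PartialOrder A] [StarOrderedRing A]
    {p a : A} (hp : IsStarProjection p) (ha : a ∈ leftInvertiblesAt p) :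
    (∃ k, IsCornerInverse p (star a * a) k) ∧
      ∀ c, IsCornerInverse p (CFC.sqrt (star a * a)) c →
        a * c ∈ partialIsometriesAt p ∧ CornerEquiv p a (a * c) := by
  obtain ⟨hap, b, -, hba⟩ := ha
  refine ⟨exists_isCornerInverse_star_mul_self hp hap.symm hba, fun c hc ↦ ⟨?_, ?_⟩⟩
  · exact hc.mul_mem_partialIsometriesAt hp (.of_nonneg (CFC.sqrt_nonneg _))
      (CFC.sqrt_mul_sqrt_self _ (star_mul_self_nonneg a))
  · exact hc.cornerEquiv_mul hp.isIdempotentElem a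

/-- If `a ∈ L_p`, then `a*a` is invertible in `pAp`, and if `c` denotes the inverse
of `(a*a)^{1/2}` in `pAp`, then `u = a*c` belongs to `K_p` and `a ∼₁ u`. -/
theorem stmt_1 {A : Type*} [CStarAlgebra A] [PartialOrder A] [StarOrderedRing A]
    (p : A) (hp_star : p = star p) (hp_idem : p * p = p)
    (a : A) (ha : a = a * p) (haL : ∃ b : A, b = p * b ∧ b * a = p) :
    (∃ k : A, k = p * k * p ∧ (star a * a) * k = p ∧ k * (star a * a) = p) ∧
    ∀ c : A, c = p * c * p → CFC.sqrt (star a * a) * c = p → c * CFC.sqrt (star a * a) = p →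
      ((a * c = (a * c) * p ∧ star (a * c) * (a * c) = p) ∧
        ∃ h : A, h = p * h * p ∧ (∃ k : A, k = p * k * p ∧ h * k = p ∧ k * h = p) ∧
          a * h = a * c) := by
  obtain ⟨exists_inverse, of_inverse⟩ := stmt_1_general ⟨hp_idem, hp_star.symm⟩ ⟨ha, haL⟩
  exact ⟨exists_inverse, fun c hc hsc hcs ↦ of_inverse c ⟨hc, hsc, hcs⟩⟩
end

section
/- If g ∈ A is invertible, then there exists a unitary v ∈ A (v*v = vv* = 1) such that gp ∼₁ vp, i.e. there exists h ∈ pAp invertible in pAp with (gp)h = vp. -/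
/-!
Put `x = g p + (g⋆)⁻¹ (1 - p)`. The columns `g p` and `(g⋆)⁻¹ (1 - p)` are orthogonal, so `x⋆ x`
commutes with `p`, and then so does `|x|`. With `a = g⋆ g`, we have `x = (g⋆)⁻¹ (a p + (1 - p))`.
Since `1 - b c` is invertible exactly when `1 - c b` is, `a p + (1 - p)` is invertible exactly when
`p a p + (1 - p)` is, and the latter dominates a positive scalar. So `x` is invertible,
`v = x |x|⁻¹` is unitary, and `g p · p |x|⁻¹ = x p |x|⁻¹ = v p`.
-/

lemma mul_eq_compression_of_commute {S : Type*} [Semigroup S] {p a : S} (hp : IsIdempotentElem p)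
    (ha : Commute a p) : p * a = p * (p * a) * p := by
  rw [← mul_assoc p, hp.eq, mul_assoc, ha.eq, ← mul_assoc, hp.eq]

lemma corner_mul_corner_eq_of_mul_eq_one {M : Type*} [Monoid M] {p a b : M}
    (hp : IsIdempotentElem p) (ha : Commute a p) (hab : a * b = 1) : p * a * (p * b) = p := by
  rw [mul_assoc, ← mul_assoc a, ha.eq, mul_assoc p a, hab, mul_one, hp.eq]

section Ring

variable {R : Type*} [Ring R]

lemma isUnit_one_sub_mul_comm (a b : R) : IsUnit (1 - a * b) ↔ IsUnit (1 - b * a) := by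
  simpa [spectrum.mem_iff, not_iff_not] using
    spectrum.unit_mem_mul_comm (R := ℤ) (r := 1) (a := a) (b := b)

lemma isUnit_mul_add_one_sub_iff {p : R} (hp : IsIdempotentElem p) (a : R) :
    IsUnit (a * p + (1 - p)) ↔ IsUnit (p * a * p + (1 - p)) := by
  have column : a * p + (1 - p) = 1 - (1 - a) * p * p := by
    rw [mul_assoc, hp.eq]
    noncomm_ring
  have compression : p * a * p + (1 - p) = 1 - p * ((1 - a) * p) := by
    rw [sub_mul, mul_sub, one_mul, hp.eq]
    noncomm_ring
  rw [column, compression, isUnit_one_sub_mul_comm]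

end Ring

section StarRing

variable {R : Type*} [Ring R] [StarRing R] {p : R}

/-- The element `g p + (g⋆)⁻¹ (1 - p)`, which completes the column `g p` of an invertible `g` by a
column orthogonal to it. -/
def orthogonalCompletion (p : R) (g : Rˣ) : R :=
  g * p + star (↑g⁻¹ : R) * (1 - p)

lemma orthogonalCompletion_mul_self (hp : IsIdempotentElem p) (g : Rˣ) :
    orthogonalCompletion p g * p = g * p := by
  rw [orthogonalCompletion, add_mul, mul_assoc, mul_assoc, hp.eq, hp.one_sub_mul_self, mul_zero,
    add_zero]

lemma orthogonalCompletion_eq_star_inv_mul (p : R) (g : Rˣ) :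
    orthogonalCompletion p g = star (↑g⁻¹ : R) * (star (g : R) * g * p + (1 - p)) := by
  have star_inv_mul_star : star (↑g⁻¹ : R) * star (g : R) = 1 := by
    rw [← star_mul, g.mul_inv, star_one]
  rw [orthogonalCompletion, mul_add, mul_assoc (star (g : R)), ← mul_assoc _ (star (g : R)),
    star_inv_mul_star, one_mul]

lemma star_orthogonalCompletion_mul (hp : IsSelfAdjoint p) (g : Rˣ) :
    star (orthogonalCompletion p g) * g = p * (star (g : R) * g) + (1 - p) := by
  simp only [orthogonalCompletion, star_add, star_mul, star_sub, star_one, star_star, hp.star_eq,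
    add_mul, mul_assoc, g.inv_mul, mul_one]

lemma commute_star_mul_orthogonalCompletion (hp : IsStarProjection p) (g : Rˣ) :
    Commute (star (orthogonalCompletion p g) * orthogonalCompletion p g) p := by
  set x := orthogonalCompletion p g
  have compression : star x * x * p = p * (star (g : R) * g) * p := by
    rw [mul_assoc, orthogonalCompletion_mul_self hp.isIdempotentElem, ← mul_assoc,
      star_orthogonalCompletion_mul hp.isSelfAdjoint, add_mul, hp.one_sub_mul_self, add_zero]
  rw [IsSelfAdjoint.commute_iff (.star_mul_self x) hp.isSelfAdjoint, compression]
  exact (IsSelfAdjoint.star_mul_self (g : R)).conjugate_self hp.isSelfAdjoint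

end StarRing

section CStarAlgebra

variable {A : Type*} [CStarAlgebra A] [PartialOrder A] [StarOrderedRing A]

lemma exists_pos_algebraMap_le {a : A} (ha : IsStrictlyPositive a) :
    ∃ r : ℝ, 0 < r ∧ algebraMap ℝ A r ≤ a := by
  cases subsingleton_or_nontrivial A
  · exact ⟨1, one_pos, (Subsingleton.elim _ _).le⟩
  · exact (CFC.exists_pos_algebraMap_le_iff ha.isSelfAdjoint).2 fun _ ↦ ha.spectrum_pos

lemma isStrictlyPositive_compression_add {p a b : A} (hp : IsStarProjection p)
    (ha : IsStrictlyPositive a) (hb : IsStrictlyPositive b) :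
    IsStrictlyPositive (p * a * p + (1 - p) * b * (1 - p)) := by
  obtain ⟨r, r_pos, r_le⟩ := exists_pos_algebraMap_le ha
  obtain ⟨s, s_pos, s_le⟩ := exists_pos_algebraMap_le hb
  have min_pos : 0 < min r s := lt_min r_pos s_pos
  set c := algebraMap ℝ A (min r s)
  have c_pos : IsStrictlyPositive c := isStrictlyPositive_algebraMap min_pos
  have c_le_a : c ≤ a := (algebraMap_mono A (min_le_left r s)).trans r_le
  have c_le_b : c ≤ b := (algebraMap_mono A (min_le_right r s)).trans s_le
  refine c_pos.of_le ?_
  calc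
    c = p * c * p + (1 - p) * c * (1 - p) := by
      rw [← Algebra.commutes, ← Algebra.commutes, mul_assoc, mul_assoc, hp.isIdempotentElem.eq,
        hp.one_sub.isIdempotentElem.eq, ← mul_add, add_sub_cancel, mul_one]
    _ ≤ p * a * p + (1 - p) * b * (1 - p) :=
      add_le_add (hp.isSelfAdjoint.conjugate_le_conjugate c_le_a)
        (hp.one_sub.isSelfAdjoint.conjugate_le_conjugate c_le_b)

lemma isUnit_mul_add_one_sub {p a : A} (hp : IsStarProjection p) (ha : IsStrictlyPositive a) :
    IsUnit (a * p + (1 - p)) := by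
  have hpos := isStrictlyPositive_compression_add hp ha isStrictlyPositive_one
  rw [mul_one, hp.one_sub.isIdempotentElem.eq] at hpos
  exact (isUnit_mul_add_one_sub_iff hp.isIdempotentElem a).2 hpos.isUnit

lemma isUnit_cfcAbs {x : A} (hx : IsUnit x) : IsUnit (CFC.abs x) :=
  (CFC.isUnit_sqrt_iff _ (star_mul_self_nonneg x)).2 (hx.star.mul hx)

lemma mul_inv_cfcAbs_mem_unitary (x s : Aˣ) (hs : (s : A) = CFC.abs (x : A)) :
    (x * ↑s⁻¹ : A) ∈ unitary A := by
  rw [Units.mul_inv_mem_unitary]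
  ext
  simp only [Units.val_mul, Units.coe_star, hs, (CFC.abs_nonneg (x : A)).isSelfAdjoint.star_eq,
    CFC.abs_mul_abs]

lemma exists_unitary_mul_eq_of_commute_star_mul_self {x p : A} (hx : IsUnit x)
    (hxp : Commute (star x * x) p) :
    ∃ v ∈ unitary A, ∃ s : Aˣ, Commute (s : A) p ∧ v * s = x := by
  obtain ⟨s, hs⟩ := isUnit_cfcAbs hx
  lift x to Aˣ using hx
  refine ⟨x * ↑s⁻¹, mul_inv_cfcAbs_mem_unitary x s hs, s, ?_, Units.inv_mul_cancel_right _ _⟩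
  rw [hs]
  exact hxp.cfcₙ_nnreal _

lemma isUnit_orthogonalCompletion {p : A} (hp : IsStarProjection p) (g : Aˣ) :
    IsUnit (orthogonalCompletion p g) := by
  have gram_pos : IsStrictlyPositive (star (g : A) * g) :=
    (g.isUnit.star.mul g.isUnit).isStrictlyPositive (star_mul_self_nonneg _)
  rw [orthogonalCompletion_eq_star_inv_mul]
  exact g⁻¹.isUnit.star.mul (isUnit_mul_add_one_sub hp gram_pos)

end CStarAlgebra

/-- If `g ∈ A` is invertible, then there exists a unitary `v ∈ A` such that
`gp ∼₁ vp`, i.e. there exists `h ∈ pAp` invertible in `pAp` with `(gp)h = vp`. -/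
theorem stmt_2 {A : Type*} [CStarAlgebra A]
    (p : A) (hp_star : p = star p) (hp_idem : p * p = p)
    (g : A) (hg : IsUnit g) :
    ∃ v h : A, star v * v = 1 ∧ v * star v = 1 ∧
      h = p * h * p ∧ (∃ k : A, k = p * k * p ∧ h * k = p ∧ k * h = p) ∧
      (g * p) * h = v * p := by
  let _ : PartialOrder A := CStarAlgebra.spectralOrder A
  have _ : StarOrderedRing A := CStarAlgebra.spectralOrderedRing A
  have hp : IsStarProjection p := ⟨hp_idem, hp_star.symm⟩
  obtain ⟨g, rfl⟩ := hg
  obtain ⟨v, v_unitary, s, s_comm, v_mul_s⟩ :=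
    exists_unitary_mul_eq_of_commute_star_mul_self (isUnit_orthogonalCompletion hp g)
      (commute_star_mul_orthogonalCompletion hp g)
  have s_inv_comm : Commute (↑s⁻¹ : A) p := s_comm.units_inv_left
  have corner_inverse : ∃ k : A, k = p * k * p ∧ p * ↑s⁻¹ * k = p ∧ k * (p * ↑s⁻¹) = p :=
    ⟨p * s, mul_eq_compression_of_commute hp_idem s_comm,
      corner_mul_corner_eq_of_mul_eq_one hp_idem s_inv_comm s.inv_mul,
      corner_mul_corner_eq_of_mul_eq_one hp_idem s_comm s.mul_inv⟩
  refine ⟨v, p * ↑s⁻¹, Unitary.star_mul_self_of_mem v_unitary,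
    Unitary.mul_star_self_of_mem v_unitary, mul_eq_compression_of_commute hp_idem s_inv_comm,
    corner_inverse, ?_⟩
  calc
    g * p * (p * ↑s⁻¹) = v * s * p * (p * ↑s⁻¹) := by
      rw [v_mul_s, orthogonalCompletion_mul_self hp_idem]
    _ = v * (p * s * (p * ↑s⁻¹)) := by rw [mul_assoc v, s_comm.eq, mul_assoc v]
    _ = v * p := by rw [corner_mul_corner_eq_of_mul_eq_one hp_idem s_comm s.mul_inv]
end

section
/- For v ∈ K_p, the element pvp is invertible in the corner algebra pAp if and only if ‖vv* − p‖ < 1. -/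
/-!
Write `q = vv*` and `a = pvp`. A contraction `x` in a unital C*-algebra is invertible iff
`‖1 - x*x‖ < 1` and `‖1 - xx*‖ < 1`. Applied to `x = a + (1 - p)`, which is invertible iff `a` is
invertible in `pAp`, this says that `‖p - a*a‖ < 1` and `‖p - aa*‖ < 1`. The two norms are
`‖q - pq‖²` and `‖p - pq‖²`, and `‖p - q‖` is the maximum of `‖p - pq‖` and `‖q - pq‖`, because
`p - q = (p - pq) - (q - pq)` has summands with orthogonal ranges and orthogonal supports.
-/

section Norm

variable {A : Type*} [NonUnitalCStarAlgebra A]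

lemma norm_add_eq_max_of_star_mul_eq_zero {x y : A} (hran : star x * y = 0)
    (hsupp : x * star y = 0) : ‖x + y‖ = max ‖x‖ ‖y‖ := by
  have hran' : star y * x = 0 := by simpa using congrArg star hran
  have hsq : star (x + y) * (x + y) = star x * x + star y * y := by
    simp only [star_add, mul_add, add_mul, hran, hran', add_zero, zero_add]
  have horth : star x * x * (star y * y) = 0 := by
    rw [mul_assoc, ← mul_assoc x, hsupp, zero_mul, mul_zero]
  have hmax := (IsSelfAdjoint.star_mul_self x).norm_add_eq_max (.star_mul_self y) horth
  rw [← hsq] at hmax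
  simp only [CStarRing.norm_star_mul_self, ← sq] at hmax
  rw [← pow_left_inj₀ (norm_nonneg _) (by positivity) two_ne_zero, hmax]
  exact ((pow_left_monotoneOn (n := 2)).map_max (norm_nonneg x) (norm_nonneg y)).symm

lemma norm_sub_eq_max_of_isStarProjection {p q : A} (hp : IsStarProjection p)
    (hq : IsStarProjection q) : ‖p - q‖ = max ‖p - q * p‖ ‖q - p * q‖ := by
  have hp_star := hp.isSelfAdjoint.star_eq
  have hq_star := hq.isSelfAdjoint.star_eq
  have hp_idem := hp.isIdempotentElem
  have hq_idem := hq.isIdempotentElem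
  have hran : star (p - p * q) * (p * q - q) = 0 := by
    simp only [star_sub, star_mul, hp_star, hq_star, mul_sub, sub_mul, ← mul_assoc, hp_idem.eq,
      hp_idem.mul_mul_self, sub_self]
  have hsupp : (p - p * q) * star (p * q - q) = 0 := by
    simp only [star_sub, star_mul, hp_star, hq_star, mul_sub, sub_mul, ← mul_assoc,
      hq_idem.mul_mul_self, sub_self, zero_mul]
  have hflip : ‖p - p * q‖ = ‖p - q * p‖ := by
    rw [← norm_star, star_sub, star_mul, hp_star, hq_star]
  rw [← sub_add_sub_cancel p (p * q) q, norm_add_eq_max_of_star_mul_eq_zero hran hsupp, hflip,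
    norm_sub_rev (p * q)]

end Norm

section CStarRing

variable {A : Type*} [NonUnitalNormedRing A] [StarRing A] [CStarRing A]

lemma norm_star_mul_self_sub_of_isStarProjection {p : A} (hp : IsStarProjection p) (v : A) :
    ‖star v * v - star v * p * v‖ = ‖v - p * v‖ ^ 2 := by
  have hpyth : star (v - p * v) * (v - p * v) = star v * v - star v * p * v := by
    simp only [star_sub, star_mul, hp.isSelfAdjoint.star_eq, mul_sub, sub_mul, ← mul_assoc,
      hp.isIdempotentElem.mul_mul_self, sub_self, zero_mul, sub_zero]
  rw [← hpyth, CStarRing.norm_star_mul_self, sq]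

lemma norm_mul_star_of_mul_star_mul_self {v w : A} (h : w * (star v * v) = w) :
    ‖w * star v‖ = ‖w‖ := by
  have hsq : w * star v * star (w * star v) = w * star w := by
    rw [star_mul, star_star, ← mul_assoc, mul_assoc w, h]
  rw [← mul_self_inj (norm_nonneg _) (norm_nonneg _), ← CStarRing.norm_self_mul_star, hsq,
    CStarRing.norm_self_mul_star]

lemma norm_le_one_of_isStarProjection_star_mul_self {v : A} (hv : IsStarProjection (star v * v)) :
    ‖v‖ ≤ 1 := by
  rw [← abs_norm, ← sq_le_one_iff_abs_le_one, sq, ← CStarRing.norm_star_mul_self]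
  exact hv.norm_le

end CStarRing

section Contraction

lemma isUnit_iff_isUnit_star_mul_self_and_isUnit_mul_star_self {M : Type*} [Monoid M] [StarMul M]
    {x : M} : IsUnit x ↔ IsUnit (star x * x) ∧ IsUnit (x * star x) := by
  refine ⟨fun h ↦ ⟨h.star.mul h, h.mul h.star⟩, fun ⟨hl, hr⟩ ↦ ?_⟩
  obtain ⟨l, hl⟩ := hl.exists_left_inv
  obtain ⟨r, hr⟩ := hr.exists_right_inv
  exact isUnit_iff_exists_and_exists.2 ⟨⟨star x * r, by rwa [← mul_assoc]⟩,
    ⟨l * star x, by rwa [mul_assoc]⟩⟩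

variable {A : Type*} [CStarAlgebra A]

lemma isUnit_iff_norm_one_sub_lt_one [PartialOrder A] [StarOrderedRing A] {a : A} (h0 : 0 ≤ a)
    (h1 : a ≤ 1) : IsUnit a ↔ ‖1 - a‖ < 1 := by
  nontriviality A
  refine ⟨fun ha ↦ ?_, fun h ↦ by simpa using isUnit_one_sub_of_norm_lt_one h⟩
  have hle : ‖1 - a‖ ≤ 1 :=
    (CStarAlgebra.norm_le_one_iff_of_nonneg _ (sub_nonneg.2 h1)).2 (sub_le_self 1 h0)
  refine hle.lt_of_ne fun heq ↦ spectrum.zero_notMem ℝ ha ?_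
  have hmem := CStarAlgebra.norm_mem_spectrum_of_nonneg (sub_nonneg.2 h1)
  rw [heq, spectrum.mem_iff] at hmem
  simpa [spectrum.mem_iff] using hmem

lemma isUnit_iff_norm_one_sub_lt_one_of_norm_le_one {x : A} (hx : ‖x‖ ≤ 1) :
    IsUnit x ↔ ‖1 - star x * x‖ < 1 ∧ ‖1 - x * star x‖ < 1 := by
  let := CStarAlgebra.spectralOrder A
  have := CStarAlgebra.spectralOrderedRing A
  have hxx : ‖x‖ * ‖x‖ ≤ 1 := mul_le_one₀ hx (norm_nonneg x) hx
  have hl : star x * x ≤ 1 := by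
    rwa [← CStarAlgebra.norm_le_one_iff_of_nonneg _ (star_mul_self_nonneg x),
      CStarRing.norm_star_mul_self]
  have hr : x * star x ≤ 1 := by
    rwa [← CStarAlgebra.norm_le_one_iff_of_nonneg _ (mul_star_self_nonneg x),
      CStarRing.norm_self_mul_star]
  rw [isUnit_iff_isUnit_star_mul_self_and_isUnit_mul_star_self,
    isUnit_iff_norm_one_sub_lt_one (star_mul_self_nonneg x) hl,
    isUnit_iff_norm_one_sub_lt_one (mul_star_self_nonneg x) hr]

end Contraction

section Corner

lemma exists_corner_inverse_iff_isUnit {R : Type*} [Ring R] {p a : R} (hp : IsIdempotentElem p)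
    (hpa : p * a = a) (hap : a * p = a) :
    (∃ k, k = p * k * p ∧ a * k = p ∧ k * a = p) ↔ IsUnit (a + (1 - p)) := by
  have hpp := hp.eq
  constructor
  · rintro ⟨k, hk, hak, hka⟩
    have hpk : p * k = k := by rw [hk]; simp only [← mul_assoc, hpp]
    have hkp : k * p = k := by rw [hk]; simp only [mul_assoc, hpp]
    refine ⟨⟨a + (1 - p), k + (1 - p), ?_, ?_⟩, rfl⟩
    · simp only [mul_add, add_mul, mul_sub, sub_mul, mul_one, one_mul, hak, hap, hpk, hpp]
      abel
    · simp only [mul_add, add_mul, mul_sub, sub_mul, mul_one, one_mul, hka, hkp, hpa, hpp]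
      abel
  · rintro ⟨u, hu⟩
    have hpu : p * u = a := by rw [hu, mul_add, hpa, hp.mul_one_sub_self, add_zero]
    have hup : u * p = a := by rw [hu, add_mul, hap, hp.one_sub_mul_self, add_zero]
    have hcomm : p * ↑u⁻¹ = ↑u⁻¹ * p := Commute.units_inv_right (hpu.trans hup.symm)
    refine ⟨↑u⁻¹ * p, ?_, ?_, ?_⟩
    · rw [← mul_assoc, hcomm, mul_assoc _ p p, hpp, mul_assoc, hpp]
    · rw [← hpu, mul_assoc, Units.mul_inv_cancel_left, hpp]
    · rw [mul_assoc, hpa, ← hup, Units.inv_mul_cancel_left]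

lemma exists_corner_inverse_iff_of_norm_le_one {A : Type*} [CStarAlgebra A] {p a : A}
    (hp : IsStarProjection p) (hpa : p * a = a) (hap : a * p = a) (ha : ‖a‖ ≤ 1) :
    (∃ k, k = p * k * p ∧ a * k = p ∧ k * a = p) ↔
      ‖p - star a * a‖ < 1 ∧ ‖p - a * star a‖ < 1 := by
  have hp_star := hp.isSelfAdjoint.star_eq
  have hpp := hp.isIdempotentElem.eq
  have hsap : star a * p = star a := by simpa [hp_star] using congrArg star hpa
  have hpsa : p * star a = star a := by simpa [hp_star] using congrArg star hap
  have hstar : star (a + (1 - p)) = star a + (1 - p) := by simp [hp_star]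
  have hnorm : ‖a + (1 - p)‖ ≤ 1 := by
    rw [norm_add_eq_max_of_star_mul_eq_zero (by rw [mul_sub, mul_one, hsap, sub_self])
      (by rw [hp.one_sub.isSelfAdjoint.star_eq, mul_sub, mul_one, hap, sub_self])]
    exact max_le ha hp.one_sub.norm_le
  have hl : 1 - star (a + (1 - p)) * (a + (1 - p)) = p - star a * a := by
    simp only [hstar, mul_add, add_mul, mul_sub, sub_mul, mul_one, one_mul, hpa, hsap, hpp]
    abel
  have hr : 1 - (a + (1 - p)) * star (a + (1 - p)) = p - a * star a := by
    simp only [hstar, mul_add, add_mul, mul_sub, sub_mul, mul_one, one_mul, hpsa, hap, hpp]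
    abel
  rw [exists_corner_inverse_iff_isUnit hp.isIdempotentElem hpa hap,
    isUnit_iff_norm_one_sub_lt_one_of_norm_le_one hnorm, hl, hr]

end Corner

/-- For `v ∈ K_p`, the element `pvp` is invertible in the corner algebra `pAp`
if and only if `‖vv* − p‖ < 1`. -/
theorem stmt_8 {A : Type*} [CStarAlgebra A]
    (p : A) (hp_star : p = star p) (hp_idem : p * p = p)
    (v : A) (hv : v = v * p) (hv' : star v * v = p) :
    (∃ k : A, k = p * k * p ∧ (p * v * p) * k = p ∧ k * (p * v * p) = p) ↔
      ‖v * star v - p‖ < 1 := by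
  have hp : IsStarProjection p := ⟨hp_idem, hp_star.symm⟩
  have hq : IsStarProjection (v * star v) :=
    ⟨isIdempotentElem_star_mul_self_iff_isIdempotentElem_self_mul_star.1 (hv' ▸ hp_idem),
      .mul_star_self v⟩
  have hpvp : p * v * p = p * v := by rw [mul_assoc, ← hv]
  have hnorm : ‖p * v‖ ≤ 1 := (norm_mul_le p v).trans <| mul_le_one₀ hp.norm_le (norm_nonneg v) <|
    norm_le_one_of_isStarProjection_star_mul_self (hv' ▸ hp)
  have hl : ‖p - star (p * v) * (p * v)‖ = ‖v * star v - p * (v * star v)‖ ^ 2 := by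
    have hw : (v - p * v) * (star v * v) = v - p * v := by rw [hv', sub_mul, hpvp, ← hv]
    rw [← mul_assoc p v, ← sub_mul, norm_mul_star_of_mul_star_mul_self hw,
      ← norm_star_mul_self_sub_of_isStarProjection hp, hv', star_mul, ← hp_star, ← mul_assoc,
      hp.isIdempotentElem.mul_mul_self]
  have hr : ‖p - p * v * star (p * v)‖ = ‖p - v * star v * p‖ ^ 2 := by
    rw [← norm_star_mul_self_sub_of_isStarProjection hq, star_mul, ← hp_star, hp_idem]
    simp only [mul_assoc]
  rw [hpvp, exists_corner_inverse_iff_of_norm_le_one hp (by rw [← mul_assoc, hp_idem]) hpvp hnorm,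
    hl, hr, sq_lt_one_iff₀ (norm_nonneg _), sq_lt_one_iff₀ (norm_nonneg _), ← max_lt_iff,
    ← norm_sub_eq_max_of_isStarProjection hq hp]
end

section
/- Let H be an infinite-dimensional separable complex Hilbert space, p ∈ B(H) a nonzero orthogonal projection, and g ∈ B(H) invertible. Suppose that for every orthogonal projection q ∈ B(H) that is Murray–von Neumann equivalent to p (i.e. q = vv* and v*v = p for some v ∈ B(H)), g maps the range of q onto the range of q. Then g is a scalar multiple of the identity: g = c·I for some c ∈ ℂ. -/
/-!
Two ingredients give the theorem.

* *Rigidity.* Let `K` be a subspace such that neither `K` nor `Kᗮ` is trivial, and suppose that a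
  linear map `g` leaves invariant every image of `K` under a unitary. If `x ∈ K` and the component
  `w` of `g x` orthogonal to `x` is nonzero, then the reflection exchanging `w` with a vector
  `f ∈ Kᗮ` of the same norm fixes `x`; the image of `K` contains `x`, hence `g x`, hence `w`, so
  applying the reflection again puts `f` into `K`, which is absurd. As unitaries can move `K` onto
  any given vector, every vector is an eigenvector of `g`.
* *A proper equivalent projection.* Every unitary conjugate of a projection equivalent to `p` is
  equivalent to `p`, so rigidity applies as soon as some projection equivalent to `p` is not `1`.
  Only `p = 1` needs an argument: an infinite-dimensional Hilbert space carries a non-surjective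
  isometry.
-/

open scoped InnerProductSpace

section Rigidity

variable {𝕜 E : Type*} [RCLike 𝕜] [NormedAddCommGroup E] [InnerProductSpace 𝕜 E]

theorem reflection_sub_of_inner_comm {v w : E} (hnorm : ‖v‖ = ‖w‖) (hinner : ⟪v, w⟫_𝕜 = ⟪w, v⟫_𝕜) :
    (𝕜 ∙ (v - w))ᗮ.reflection v = w := by
  set R : E ≃ₗᵢ[𝕜] E := (𝕜 ∙ (v - w))ᗮ.reflection
  have h_sub : R v - R w = w - v := by
    rw [← map_sub, ← neg_sub v w]
    exact Submodule.reflection_orthogonalComplement_singleton_eq_neg (v - w)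
  have h_add : R v + R w = v + w := by
    rw [← map_add]
    refine Submodule.reflection_mem_subspace_eq_self ?_
    rw [Submodule.mem_orthogonal_singleton_iff_inner_right, inner_sub_left, inner_add_right,
      inner_add_right, inner_self_eq_norm_sq_to_K, inner_self_eq_norm_sq_to_K, hnorm, hinner]
    ring
  have h_two : (2 : 𝕜) • R v = (2 : 𝕜) • w :=
    calc (2 : 𝕜) • R v = (R v - R w) + (R v + R w) := by module
      _ = (2 : 𝕜) • w := by rw [h_sub, h_add]; module
  exact smul_right_injective E two_ne_zero h_two

theorem exists_mem_norm_eq_of_ne_bot {K : Submodule 𝕜 E} (hK : K ≠ ⊥) {r : ℝ} (hr : 0 ≤ r) :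
    ∃ y ∈ K, ‖y‖ = r := by
  obtain ⟨y, hyK, hy⟩ := K.exists_mem_ne_zero_of_ne_bot hK
  exact ⟨_, K.smul_mem _ hyK, norm_smul_inv_norm' hr hy⟩

theorem exists_linearIsometryEquiv_mem_map {K : Submodule 𝕜 E} (hK : K ≠ ⊥) (x : E) :
    ∃ U : E ≃ₗᵢ[𝕜] E, x ∈ K.map (U.toLinearEquiv : E →ₗ[𝕜] E) := by
  obtain ⟨y, hyK, hy⟩ := exists_mem_norm_eq_of_ne_bot hK (norm_nonneg x)
  -- Over `ℂ` a reflection can exchange `x` only with a vector whose inner product with `x` is real.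
  obtain ⟨c, hc, hphase⟩ := RCLike.exists_norm_eq_mul_self ⟪x, y⟫_𝕜
  have hnorm : ‖c • y‖ = ‖x‖ := by rw [norm_smul, hc, one_mul, hy]
  have hinner : ⟪c • y, x⟫_𝕜 = ⟪x, c • y⟫_𝕜 := by
    rw [← inner_conj_symm, inner_smul_right, ← hphase, RCLike.conj_ofReal]
  exact ⟨(𝕜 ∙ (c • y - x))ᗮ.reflection, c • y, K.smul_mem c hyK,
    reflection_sub_of_inner_comm hnorm hinner⟩

theorem apply_mem_span_singleton_of_forall_map_mem_invtSubmodule {K : Submodule 𝕜 E}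
    (hK : Kᗮ ≠ ⊥) {g : E →ₗ[𝕜] E}
    (hg : ∀ U : E ≃ₗᵢ[𝕜] E, K.map (U.toLinearEquiv : E →ₗ[𝕜] E) ∈ Module.End.invtSubmodule g)
    {x : E} (hx : x ∈ K) : g x ∈ 𝕜 ∙ x := by
  obtain ⟨a, ha, w, hw, hgx⟩ := (𝕜 ∙ x).exists_add_mem_mem_orthogonal (g x)
  obtain ⟨f, hf, hfw⟩ := exists_mem_norm_eq_of_ne_bot hK (norm_nonneg w)
  have hxw : ⟪x, w⟫_𝕜 = 0 := Submodule.mem_orthogonal_singleton_iff_inner_right.1 hw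
  have hxf : ⟪x, f⟫_𝕜 = 0 := hf x hx
  have hspan {L : Submodule 𝕜 E} (hL : L ∈ Module.End.invtSubmodule g) (hxL : x ∈ L) : w ∈ L := by
    rw [← add_sub_cancel_left a w, ← hgx]
    exact L.sub_mem (hL hxL) ((Submodule.span_singleton_le_iff_mem x L).2 hxL ha)
  have hwK : w ∈ K := hspan (K.map_id ▸ hg (.refl 𝕜 E)) hx
  have hwf : ⟪w, f⟫_𝕜 = 0 := hf w hwK
  set R : E ≃ₗᵢ[𝕜] E := (𝕜 ∙ (w - f))ᗮ.reflection
  have hRx : R x = x := by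
    refine Submodule.reflection_mem_subspace_eq_self ?_
    rw [Submodule.mem_orthogonal_singleton_iff_inner_left, inner_sub_right, hxw, hxf, sub_zero]
  have hRw : R w = f :=
    reflection_sub_of_inner_comm hfw.symm (hwf.trans (inner_eq_zero_symm.1 hwf).symm)
  obtain ⟨y, hyK, hRy⟩ := hspan (hg R) ⟨x, hx, hRx⟩
  have hyf : y = f := by
    rw [← hRw, ← hRy]
    exact (Submodule.reflection_reflection _ y).symm
  have hf_zero : f = 0 := inner_self_eq_zero.1 (hf f (hyf ▸ hyK))
  have hw_zero : w = 0 := by rw [← norm_eq_zero, ← hfw, hf_zero, norm_zero]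
  rwa [hgx, hw_zero, add_zero]

theorem exists_eq_smul_one_of_forall_map_mem_invtSubmodule {K : Submodule 𝕜 E}
    (hK_bot : K ≠ ⊥) (hK_orthogonal : Kᗮ ≠ ⊥) {g : E →ₗ[𝕜] E}
    (hg : ∀ U : E ≃ₗᵢ[𝕜] E, K.map (U.toLinearEquiv : E →ₗ[𝕜] E) ∈ Module.End.invtSubmodule g) :
    ∃ c : 𝕜, g = c • 1 := by
  refine LinearMap.exists_eq_smul_id_of_forall_notLinearIndependent fun x hindep ↦ ?_
  obtain ⟨U, hxU⟩ := exists_linearIsometryEquiv_mem_map hK_bot x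
  have hU_orthogonal : (K.map (U.toLinearEquiv : E →ₗ[𝕜] E))ᗮ ≠ ⊥ := by
    rwa [← Submodule.map_orthogonal_equiv, Ne, Submodule.map_eq_bot_iff]
  have hU_map (V : E ≃ₗᵢ[𝕜] E) :
      (K.map (U.toLinearEquiv : E →ₗ[𝕜] E)).map (V.toLinearEquiv : E →ₗ[𝕜] E) ∈
        Module.End.invtSubmodule g := by
    rw [← Submodule.map_comp]
    exact hg (U.trans V)
  obtain ⟨c, hc⟩ := Submodule.mem_span_singleton.1
    (apply_mem_span_singleton_of_forall_map_mem_invtSubmodule hU_orthogonal hU_map hxU)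
  exact (LinearIndependent.pair_iff' (hindep.ne_zero 0)).1 hindep c hc

end Rigidity

/-- Murray–von Neumann equivalence of `p` and `q`: they are the initial and the final projection
of a common partial isometry `v`. The definition does not require `p` and `q` to be projections. -/
def MurrayVonNeumannEquiv {A : Type*} [Mul A] [Star A] (p q : A) : Prop :=
  ∃ v : A, star v * v = p ∧ v * star v = q

namespace MurrayVonNeumannEquiv

theorem refl {A : Type*} [Mul A] [Star A] {p : A} (hp : IsStarProjection p) :
    MurrayVonNeumannEquiv p p := by
  refine ⟨p, ?_, ?_⟩ <;> rw [hp.isSelfAdjoint.star_eq, hp.isIdempotentElem.eq]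

theorem conj {A : Type*} [Monoid A] [StarMul A] {p q u : A}
    (hpq : MurrayVonNeumannEquiv p q) (hu : star u * u = 1) :
    MurrayVonNeumannEquiv p (u * q * star u) := by
  obtain ⟨v, rfl, rfl⟩ := hpq
  refine ⟨u * v, ?_, by simp only [star_mul, mul_assoc]⟩
  calc star (u * v) * (u * v) = star v * (star u * u) * v := by simp only [star_mul, mul_assoc]
    _ = star v * v := by rw [hu, mul_one]

variable {A : Type*} [NonUnitalNormedRing A] [StarRing A] [CStarRing A] {p q : A}

theorem isStarProjection (hpq : MurrayVonNeumannEquiv p q) (hp : IsStarProjection p) :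
    IsStarProjection q := by
  obtain ⟨v, hvp, rfl⟩ := hpq
  have hv_mul : v * p = v := by
    refine (sub_eq_zero.1 ((CStarRing.star_mul_self_eq_zero_iff _).1 ?_)).symm
    calc star (v - v * p) * (v - v * p)
        = star v * v - star v * v * p - (p * (star v * v) - p * (star v * v) * p) := by
          rw [star_sub, star_mul, hp.isSelfAdjoint.star_eq]; noncomm_ring
      _ = 0 := by simp only [hvp, hp.isIdempotentElem.eq, sub_self]
  refine ⟨?_, .mul_star_self v⟩
  calc v * star v * (v * star v) = v * (star v * v) * star v := by simp only [mul_assoc]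
    _ = v * star v := by rw [hvp, hv_mul]

theorem ne_zero (hpq : MurrayVonNeumannEquiv p q) (hp : p ≠ 0) : q ≠ 0 := by
  obtain ⟨v, rfl, rfl⟩ := hpq
  rwa [Ne, CStarRing.mul_star_self_eq_zero_iff, ← CStarRing.star_mul_self_eq_zero_iff]

end MurrayVonNeumannEquiv

theorem exists_injective_notMem_range {ι : Type*} [Infinite ι] (i : ι) :
    ∃ f : ι → ι, Function.Injective f ∧ i ∉ Set.range f := by
  have hcard : Cardinal.mk ι = Cardinal.mk ({i}ᶜ : Set ι) :=
    (Cardinal.mk_compl_of_infinite {i} (by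
      rw [Cardinal.mk_singleton]
      exact Cardinal.one_lt_aleph0.trans_le (Cardinal.aleph0_le_mk ι))).symm
  obtain ⟨e⟩ := Cardinal.eq.1 hcard
  refine ⟨fun j ↦ e j, Subtype.val_injective.comp e.injective, ?_⟩
  rintro ⟨j, hj⟩
  exact (e j).2 hj

section Isometry

variable {𝕜 E F : Type*} [RCLike 𝕜] [NormedAddCommGroup E] [InnerProductSpace 𝕜 E]

theorem exists_linearIsometry_apply_hilbertBasis_eq [NormedAddCommGroup F] [InnerProductSpace 𝕜 F]
    [CompleteSpace F] {ι : Type*} (b : HilbertBasis ι 𝕜 E) {u : ι → F} (hu : Orthonormal 𝕜 u) :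
    ∃ U : E →ₗᵢ[𝕜] F, ∀ i, U (b i) = u i := by
  classical
  refine ⟨hu.orthogonalFamily.linearIsometry.comp b.repr.toLinearIsometry, fun i ↦ ?_⟩
  simp [b.repr_self, hu.orthogonalFamily.linearIsometry_apply_single]

theorem exists_linearIsometry_not_surjective [CompleteSpace E] (hinf : ¬ FiniteDimensional 𝕜 E) :
    ∃ U : E →ₗᵢ[𝕜] E, ¬ Function.Surjective U := by
  obtain ⟨ι, b, -⟩ := exists_hilbertBasis 𝕜 E
  have : Infinite ι := by
    by_contra hfin
    have := fintypeOfNotInfinite hfin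
    exact hinf b.toOrthonormalBasis.toBasis.finiteDimensional_of_finite
  let i : ι := Classical.arbitrary ι
  obtain ⟨f, hf, hif⟩ := exists_injective_notMem_range i
  obtain ⟨U, hU⟩ := exists_linearIsometry_apply_hilbertBasis_eq b (b.orthonormal.comp f hf)
  refine ⟨U, fun hsurj ↦ ?_⟩
  obtain ⟨z, hz⟩ := hsurj (b i)
  have hz_zero : z = 0 := by
    refine b.repr.map_eq_zero_iff.1 (lp.ext (funext fun j ↦ ?_))
    have hij : f j ≠ i := fun h ↦ hif ⟨j, h⟩
    rw [b.repr_apply_apply, ← U.inner_map_map, hU, hz]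
    exact b.orthonormal.2 hij
  exact b.orthonormal.ne_zero i (by rw [← hz, hz_zero, map_zero])

theorem MurrayVonNeumannEquiv.exists_ne_one [CompleteSpace E] {p : E →L[𝕜] E}
    (hp : IsStarProjection p) (hinf : p = 1 → ¬ FiniteDimensional 𝕜 E) :
    ∃ q, MurrayVonNeumannEquiv p q ∧ q ≠ 1 := by
  by_cases hp_one : p = 1
  · obtain ⟨U, hU⟩ := exists_linearIsometry_not_surjective (hinf hp_one)
    let v : E →L[𝕜] E := U.toContinuousLinearMap
    refine ⟨v * star v, ⟨v, U.adjoint_comp_self.trans hp_one.symm, rfl⟩, fun hv ↦ hU fun y ↦ ?_⟩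
    exact ⟨star v y, DFunLike.congr_fun hv y⟩
  · exact ⟨p, .refl hp, hp_one⟩

end Isometry

section Projection

variable {𝕜 H : Type*} [RCLike 𝕜] [NormedAddCommGroup H] [InnerProductSpace 𝕜 H] [CompleteSpace H]

theorem range_conj_linearIsometryEquiv (q : H →L[𝕜] H) (U : H ≃ₗᵢ[𝕜] H) :
    ((U : H →L[𝕜] H) * q * star (U : H →L[𝕜] H)).range =
      q.range.map (U.toLinearEquiv : H →ₗ[𝕜] H) := by
  rw [LinearIsometryEquiv.star_eq_symm]
  ext y
  constructor
  · rintro ⟨x, rfl⟩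
    exact ⟨q (U.symm x), ⟨_, rfl⟩, rfl⟩
  · rintro ⟨_, ⟨x, rfl⟩, rfl⟩
    exact ⟨U x, by simp⟩

theorem orthogonal_range_ne_bot {q : H →L[𝕜] H} (hq : IsStarProjection q) (hq_one : q ≠ 1) :
    q.rangeᗮ ≠ ⊥ := by
  obtain ⟨_, hq_eq⟩ := isStarProjection_iff_eq_starProjection_range.1 hq
  intro hbot
  refine hq_one (hq_eq.trans ?_)
  simp only [Submodule.orthogonal_eq_bot_iff.1 hbot, Submodule.starProjection_top']

theorem stmt_9_general {p : H →L[𝕜] H} (hp : IsStarProjection p) (hp_zero : p ≠ 0)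
    (hinf : p = 1 → ¬ FiniteDimensional 𝕜 H) {g : H →ₗ[𝕜] H}
    (hg : ∀ q : H →L[𝕜] H, IsStarProjection q → MurrayVonNeumannEquiv p q →
      Set.MapsTo g (Set.range q) (Set.range q)) :
    ∃ c : 𝕜, g = c • 1 := by
  obtain ⟨q, hpq, hq_one⟩ := MurrayVonNeumannEquiv.exists_ne_one hp hinf
  have hq_bot : q.range ≠ ⊥ := by
    rw [Ne, LinearMap.range_eq_bot]
    exact fun h ↦ hpq.ne_zero hp_zero (ContinuousLinearMap.coe_injective h)
  refine exists_eq_smul_one_of_forall_map_mem_invtSubmodule hq_bot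
    (orthogonal_range_ne_bot (hpq.isStarProjection hp) hq_one) fun U ↦ ?_
  have hpU : MurrayVonNeumannEquiv p ((U : H →L[𝕜] H) * q * star (U : H →L[𝕜] H)) :=
    hpq.conj U.toLinearIsometry.adjoint_comp_self
  rw [← range_conj_linearIsometryEquiv]
  exact hg _ (hpU.isStarProjection hp) hpU

end Projection

/-- If `H` is an infinite-dimensional separable complex Hilbert space, `p` a nonzero
orthogonal projection, `g` invertible, and `g` maps the range of every projection equivalent to
`p` onto itself, then `g` is a scalar multiple of the identity. -/
theorem stmt_9 {H : Type*} [NormedAddCommGroup H] [InnerProductSpace ℂ H] [CompleteSpace H]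
    [TopologicalSpace.SeparableSpace H] (hinf : ¬ FiniteDimensional ℂ H)
    (p : H →L[ℂ] H) (hp_star : star p = p) (hp_idem : p * p = p) (hp0 : p ≠ 0)
    (g : H →L[ℂ] H) (hg : IsUnit g)
    (hmaps : ∀ q : H →L[ℂ] H, star q = q → q * q = q →
      (∃ v : H →L[ℂ] H, star v * v = p ∧ v * star v = q) →
      (g : H → H) '' Set.range (q : H → H) = Set.range (q : H → H)) :
    ∃ c : ℂ, g = c • (1 : H →L[ℂ] H) := by
  obtain ⟨c, hc⟩ := stmt_9_general (g := (g : H →ₗ[ℂ] H)) ⟨hp_idem, hp_star⟩ hp0 (fun _ ↦ hinf)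
    fun q hq hpq ↦ Set.mapsTo_iff_image_subset.2
      (hmaps q hq.isSelfAdjoint hq.isIdempotentElem hpq).subset
  exact ⟨c, ContinuousLinearMap.coe_injective hc⟩
end

section
/- Let λ, μ ∈ A be positive invertible elements satisfying ελε = λ^{-1} and εμε = μ^{-1}, where ε = 2p − 1. Then for every t ∈ ℝ, the element γ(t) = μ^{1/2} (μ^{-1/2} λ μ^{-1/2})^t μ^{1/2} (real powers taken by continuous functional calculus on positive invertible elements) is positive invertible and satisfies ε γ(t) ε = γ(t)^{-1}. (The geodesics of the positive cone A⁺ joining two positive ε-unitaries remain in the set of positive ε-unitaries.) -/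
/-!
Conjugation by `ε` is a continuous algebra endomorphism, so it commutes with real powers of positive
invertible elements whose image is again positive. It therefore carries the geodesic from `μ` to `λ`
to the geodesic from `μ⁻¹` to `λ⁻¹`, and this is the pointwise inverse of the original geodesic.
-/

open scoped Ring ContinuousFunctionalCalculus

section Ring

theorem map_ringInverse_of_isUnit {F M N : Type*} [MonoidWithZero M] [MonoidWithZero N]
    [FunLike F M N] [MonoidHomClass F M N] (φ : F) {a : M} (ha : IsUnit a) :
    φ a⁻¹ʳ = (φ a)⁻¹ʳ := by
  obtain ⟨u, rfl⟩ := ha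
  rw [Ring.inverse_unit]
  exact (Ring.inverse_unit (Units.map (φ : M →* N) u)).symm

theorem two_mul_sub_one_mul_self_of_isIdempotentElem {R : Type*} [Ring R] {p : R}
    (hp : IsIdempotentElem p) : (2 * p - 1) * (2 * p - 1) = 1 := by
  calc (2 * p - 1) * (2 * p - 1) = 4 * (p * p) - 4 * p + 1 := by noncomm_ring
    _ = 1 := by rw [hp.eq, sub_self, zero_add]

/-- The symmetry `2 * p - 1` attached to an idempotent `p`, as a unit that is definitionally its own
inverse, so that conjugating by it is `a ↦ (2 * p - 1) * a * (2 * p - 1)`. -/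
def idempotentSymmetry {R : Type*} [Ring R] (p : R) (hp : IsIdempotentElem p) : Rˣ where
  val := 2 * p - 1
  inv := 2 * p - 1
  val_inv := two_mul_sub_one_mul_self_of_isIdempotentElem hp
  inv_val := two_mul_sub_one_mul_self_of_isIdempotentElem hp

/-- The inner endomorphism `a ↦ u * a * u⁻¹` given by a unit `u`, bundled as a continuous algebra
homomorphism. -/
def unitsConj (R : Type*) {A : Type*} [CommSemiring R] [Ring A] [Algebra R A]
    [TopologicalSpace A] [SeparatelyContinuousMul A] (u : Aˣ) : A →A[R] A where
  toAlgHom := MulSemiringAction.toAlgHom R A (ConjAct.toConjAct u)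
  cont := (continuous_mul_const (↑u⁻¹ : A)).comp (continuous_const_mul (u : A))

end Ring

section FunctionalCalculus

variable {A B : Type*} [Ring A] [StarRing A] [TopologicalSpace A] [Algebra ℝ A]
  [Ring B] [StarRing B] [TopologicalSpace B] [Algebra ℝ B]

/- Unlike in `StarAlgHom.map_cfc`, `φ` need not preserve `star`: on `C(s, ℝ)` the star is trivial,
so Stone–Weierstrass for plain algebra homomorphisms applies. -/
theorem continuousAlgHom_map_cfc {P : A → Prop} {Q : B → Prop}
    [ContinuousFunctionalCalculus ℝ A P] [ContinuousFunctionalCalculus ℝ B Q] [T2Space B]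
    (φ : A →A[ℝ] B) {f : ℝ → ℝ} {a : A} (hf : ContinuousOn f (spectrum ℝ a))
    (ha : P a) (hφa : Q (φ a)) : φ (cfc f a) = cfc f (φ a) := by
  have hspec : spectrum ℝ (φ a) ⊆ spectrum ℝ a := AlgHom.spectrum_apply_subset φ a
  let incl : C(spectrum ℝ (φ a), spectrum ℝ a) :=
    ⟨Set.inclusion hspec, continuous_inclusion hspec⟩
  have comp_cfcHom : (φ : A →ₐ[ℝ] B).comp (cfcHom ha).toAlgHom =
      (cfcHom hφa).toAlgHom.comp (ContinuousMap.compRightAlgHom ℝ ℝ incl) := by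
    refine ContinuousMap.algHom_ext_map_X (φ.continuous.comp (cfcHom_continuous ha))
      ((cfcHom_continuous hφa).comp incl.continuous_precomp) ?_
    rw [Polynomial.toContinuousMapOnAlgHom_apply, Polynomial.toContinuousMapOn_X_eq_restrict_id]
    exact (congrArg φ (cfcHom_id ha)).trans (cfcHom_id hφa).symm
  rw [cfc_apply f a ha hf, cfc_apply f (φ a) hφa (hf.mono hspec)]
  exact DFunLike.congr_fun comp_cfcHom ⟨_, hf.domRestrict⟩

end FunctionalCalculus

section Geodesic

variable {A B : Type*} [PartialOrder A] [Ring A] [StarRing A] [TopologicalSpace A]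
  [StarOrderedRing A] [Algebra ℝ A] [ContinuousFunctionalCalculus ℝ A IsSelfAdjoint]
  [NonnegSpectrumClass ℝ A] [IsSemitopologicalRing A] [T2Space A]
  [PartialOrder B] [Ring B] [StarRing B] [TopologicalSpace B]
  [StarOrderedRing B] [Algebra ℝ B] [ContinuousFunctionalCalculus ℝ B IsSelfAdjoint]
  [NonnegSpectrumClass ℝ B] [IsSemitopologicalRing B] [T2Space B]

theorem ringInverse_rpow {a : A} (ha : IsStrictlyPositive a) (t : ℝ) :
    (a ^ t)⁻¹ʳ = a⁻¹ʳ ^ t := by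
  rw [CFC.inverse_eq_rpow_neg_one (a := a), CFC.rpow_rpow a (-1) t (by norm_num), neg_one_mul]
  exact Ring.inverse_unit ⟨a ^ t, a ^ (-t), CFC.rpow_mul_rpow_neg t, CFC.rpow_neg_mul_rpow t⟩

theorem continuousAlgHom_map_rpow (φ : A →A[ℝ] B) {a : A} (ha : IsStrictlyPositive a)
    (hφa : 0 ≤ φ a) (t : ℝ) : φ (a ^ t) = φ a ^ t := by
  have hcont : ContinuousOn (fun x : ℝ ↦ x ^ t) (spectrum ℝ a) := fun x hx ↦
    (Real.continuousAt_rpow_const x t (.inl (ha.spectrum_pos hx).ne')).continuousWithinAt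
  rw [CFC.rpow_eq_cfc_real, CFC.rpow_eq_cfc_real]
  exact continuousAlgHom_map_cfc φ hcont ha.isSelfAdjoint hφa.isSelfAdjoint

theorem continuousAlgHom_map_conjSqrt (φ : A →A[ℝ] B) {a : A} (ha : IsStrictlyPositive a)
    (hφa : 0 ≤ φ a) (b : A) : φ (CFC.conjSqrt a b) = CFC.conjSqrt (φ a) (φ b) := by
  have map_sqrt : φ (CFC.sqrt a) = CFC.sqrt (φ a) := by
    rw [CFC.sqrt_eq_rpow, CFC.sqrt_eq_rpow, continuousAlgHom_map_rpow φ ha hφa]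
  rw [CFC.conjSqrt_apply, CFC.conjSqrt_apply, map_mul, map_mul, map_sqrt]

theorem isStrictlyPositive_conjSqrt_ringInverse {a b : A} (ha : IsStrictlyPositive a)
    (hb : IsStrictlyPositive b) : IsStrictlyPositive (CFC.conjSqrt a⁻¹ʳ b) :=
  (CFC.isStrictlyPositive_conjSqrt_iff _ b ha.ringInverse).2 hb

/-- The geodesic `t ↦ a^(1/2) (a^(-1/2) b a^(-1/2))^t a^(1/2)` of the positive cone, which joins `a`
to `b` when both are strictly positive. Both conjugations are encoded by `CFC.conjSqrt`, with
`sqrt a⁻¹ʳ` for `a^(-1/2)`, so that its API for inverses applies. -/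
noncomputable def posGeodesic (a b : A) (t : ℝ) : A :=
  CFC.conjSqrt a (CFC.conjSqrt a⁻¹ʳ b ^ t)

namespace posGeodesic

theorem eq_rpow {a : A} (ha : IsStrictlyPositive a) (b : A) (t : ℝ) :
    posGeodesic a b t = a ^ ((1 : ℝ) / 2) *
      (a ^ (-(1 : ℝ) / 2) * b * a ^ (-(1 : ℝ) / 2)) ^ t * a ^ ((1 : ℝ) / 2) := by
  have sqrt_ringInverse : CFC.sqrt a⁻¹ʳ = a ^ (-(1 : ℝ) / 2) := by
    rw [CFC.inverse_eq_rpow_neg_one, CFC.sqrt_rpow ha.isUnit (by norm_num)]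
  rw [posGeodesic, CFC.conjSqrt_apply, CFC.conjSqrt_apply, sqrt_ringInverse,
    CFC.sqrt_eq_rpow]

theorem isStrictlyPositive {a b : A} (ha : IsStrictlyPositive a) (hb : IsStrictlyPositive b)
    (t : ℝ) : IsStrictlyPositive (posGeodesic a b t) := by
  rw [posGeodesic, CFC.isStrictlyPositive_conjSqrt_iff a _ ha]
  exact (isStrictlyPositive_conjSqrt_ringInverse ha hb).rpow _ t

theorem ringInverse_eq {a b : A} (ha : IsStrictlyPositive a) (hb : IsStrictlyPositive b)
    (t : ℝ) : (posGeodesic a b t)⁻¹ʳ = posGeodesic a⁻¹ʳ b⁻¹ʳ t := by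
  rw [posGeodesic, CFC.ringInverse_conjSqrt a _ ha,
    ringInverse_rpow (isStrictlyPositive_conjSqrt_ringInverse ha hb),
    CFC.ringInverse_conjSqrt _ b ha.ringInverse, posGeodesic]

theorem map_eq (φ : A →A[ℝ] B) {a b : A} (ha : IsStrictlyPositive a)
    (hb : IsStrictlyPositive b) (hφa : 0 ≤ φ a) (hφb : 0 ≤ φ b) (t : ℝ) :
    φ (posGeodesic a b t) = posGeodesic (φ a) (φ b) t := by
  have hφa_inv : 0 ≤ φ a⁻¹ʳ := by
    rw [map_ringInverse_of_isUnit φ ha.isUnit]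
    exact ((ha.isUnit.map φ).isStrictlyPositive hφa).ringInverse.nonneg
  have map_inner : φ (CFC.conjSqrt a⁻¹ʳ b) = CFC.conjSqrt (φ a)⁻¹ʳ (φ b) := by
    rw [continuousAlgHom_map_conjSqrt φ ha.ringInverse hφa_inv,
      map_ringInverse_of_isUnit φ ha.isUnit]
  have map_inner_nonneg : 0 ≤ φ (CFC.conjSqrt a⁻¹ʳ b) := by
    rw [map_inner]
    simpa using CFC.conjSqrt_monotone (c := (φ a)⁻¹ʳ) hφb
  rw [posGeodesic, continuousAlgHom_map_conjSqrt φ ha hφa,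
    continuousAlgHom_map_rpow φ (isStrictlyPositive_conjSqrt_ringInverse ha hb) map_inner_nonneg,
    map_inner, posGeodesic]

end posGeodesic

theorem stmt_11_general (φ : A →A[ℝ] A) {lam mu : A}
    (hlam : IsStrictlyPositive lam) (hmu : IsStrictlyPositive mu)
    (hφlam : φ lam = lam⁻¹ʳ) (hφmu : φ mu = mu⁻¹ʳ) (t : ℝ) :
    IsStrictlyPositive (posGeodesic mu lam t) ∧
      φ (posGeodesic mu lam t) = (posGeodesic mu lam t)⁻¹ʳ := by
  refine ⟨posGeodesic.isStrictlyPositive hmu hlam t, ?_⟩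
  rw [posGeodesic.map_eq φ hmu hlam (hφmu ▸ hmu.ringInverse.nonneg)
    (hφlam ▸ hlam.ringInverse.nonneg), hφmu, hφlam, posGeodesic.ringInverse_eq hmu hlam]

end Geodesic

/-- geodesics of the positive cone joining two positive `ε`-unitaries remain in
the set of positive `ε`-unitaries. -/
theorem stmt_11 {A : Type*} [CStarAlgebra A] [PartialOrder A] [StarOrderedRing A]
    (p : A) (hp_star : p = star p) (hp_idem : p * p = p)
    (lam mu : A) (hl_pos : 0 ≤ lam) (hl_u : IsUnit lam)
    (hm_pos : 0 ≤ mu) (hm_u : IsUnit mu)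
    (hl_eps : (2 * p - 1) * lam * (2 * p - 1) = Ring.inverse lam)
    (hm_eps : (2 * p - 1) * mu * (2 * p - 1) = Ring.inverse mu)
    (t : ℝ) :
    ∀ g : A, g = mu ^ ((1 : ℝ) / 2) *
        ((mu ^ (-(1 : ℝ) / 2) * lam * mu ^ (-(1 : ℝ) / 2)) ^ t) * mu ^ ((1 : ℝ) / 2) →
      0 ≤ g ∧ IsUnit g ∧ (2 * p - 1) * g * (2 * p - 1) = Ring.inverse g := by
  rintro _ rfl
  rw [← posGeodesic.eq_rpow (hm_u.isStrictlyPositive hm_pos), ← and_assoc]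
  exact stmt_11_general (unitsConj ℝ (idempotentSymmetry p hp_idem))
    (hl_u.isStrictlyPositive hl_pos) (hm_u.isStrictlyPositive hm_pos) hl_eps hm_eps t
end

section
/- Let u ∈ A be ε-unitary, i.e. u is invertible and u*εu = ε, where ε = 2p − 1. Then ‖(1−p)up‖ = ‖(1−p)u^{-1}p‖ = ‖(1−p)u*p‖. -/
/-!
Write `q = 1 - p`. Compressing `u*εu = ε` to the corner `pAp` gives
`(pup)*(pup) = p + (qup)*(qup)`, so `t = pup + q` satisfies `t*t = 1 + (qup)*(qup)`. As `u` is
invertible, also `uεu* = ε`, and in the same way `tt* = 1 + (qu*p)*(qu*p)`. Taking norms,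
`1 + ‖qup‖² = ‖t‖² = 1 + ‖qu*p‖²`. Finally `u⁻¹ = εu*ε`, so `qu⁻¹p = -qu*p`.
-/

section Monoid

variable {M : Type*}

theorem mul_mul_mul_eq_one_of_mul_mul_eq [Monoid M] {e u v : M} (he : e * e = 1)
    (h : v * e * u = e) : e * v * e * u = 1 := by
  rw [mul_assoc e, mul_assoc, h, he]

theorem mul_mul_eq_of_mul_mul_eq [Monoid M] {e u v : M} (he : e * e = 1) (hu : IsUnit u)
    (h : v * e * u = e) : u * e * v = e := by
  have right_inv : u * (e * v * e) = 1 := by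
    obtain ⟨w, rfl⟩ := hu
    rw [Units.eq_inv_of_mul_eq_one_right (mul_mul_mul_eq_one_of_mul_mul_eq he h), Units.mul_inv]
  calc u * e * v = u * (e * v * e) * e := by simp only [mul_assoc, he, mul_one]
    _ = e := by rw [right_inv, one_mul]

theorem ringInverse_eq_of_mul_mul_eq [MonoidWithZero M] {e u v : M} (he : e * e = 1)
    (hu : IsUnit u) (h : v * e * u = e) : Ring.inverse u = e * v * e := by
  rw [← one_mul (Ring.inverse u), ← mul_mul_mul_eq_one_of_mul_mul_eq he h,
    Ring.mul_inverse_cancel_right _ _ hu]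

end Monoid

section Ring

variable {R : Type*} [Ring R] {p u v : R}

/-- The compression `p * x * p` of `x` to the corner of `p`, turned into an element of the whole
ring by adding the identity `1 - p` of the complementary corner. For idempotent `p`, products of
such elements are products in the corner, up to the summand `1 - p`. -/
def unitizedCorner (p x : R) : R := p * x * p + (1 - p)

theorem star_unitizedCorner [StarRing R] (hp : IsSelfAdjoint p) (x : R) :
    star (unitizedCorner p x) = unitizedCorner p (star x) := by
  simp only [unitizedCorner, star_add, star_sub, star_one, star_mul, hp.star_eq, mul_assoc]

theorem star_one_sub_mul_mul [StarRing R] (hp : IsSelfAdjoint p) (x : R) :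
    star ((1 - p) * x * p) = p * star x * (1 - p) := by
  simp only [star_mul, star_sub, star_one, hp.star_eq, mul_assoc]

theorem unitizedCorner_mul_unitizedCorner (hp : IsIdempotentElem p) (x y : R) :
    unitizedCorner p x * unitizedCorner p y = p * x * p * (p * y * p) + (1 - p) := by
  have left_zero : p * x * p * (1 - p) = 0 := by rw [mul_assoc, hp.mul_one_sub_self, mul_zero]
  have right_zero : (1 - p) * (p * y * p) = 0 := by
    rw [← mul_assoc, ← mul_assoc, hp.one_sub_mul_self, zero_mul, zero_mul]
  rw [unitizedCorner, unitizedCorner, add_mul, mul_add, mul_add, left_zero, right_zero,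
    hp.one_sub.eq, add_zero, zero_add]

theorem two_mul_sub_one_mul_eq_self (hp : IsIdempotentElem p) : (2 * p - 1) * p = p := by
  rw [sub_mul, mul_assoc, hp.eq, two_mul, one_mul, add_sub_cancel_right]

theorem one_sub_mul_two_mul_sub_one (hp : IsIdempotentElem p) :
    (1 - p) * (2 * p - 1) = -(1 - p) := by
  rw [mul_sub, ← mul_assoc, mul_two, add_mul, hp.one_sub_mul_self, add_zero, zero_sub, mul_one]

theorem two_mul_sub_one_mul_self_eq_one (hp : IsIdempotentElem p) :
    (2 * p - 1) * (2 * p - 1) = 1 := by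
  rw [mul_sub, two_mul, mul_add, ← two_mul p, two_mul_sub_one_mul_eq_self hp, mul_one, two_mul,
    sub_sub_cancel]

theorem one_sub_mul_conj_mul (hp : IsIdempotentElem p) (x : R) :
    (1 - p) * ((2 * p - 1) * x * (2 * p - 1)) * p = -((1 - p) * x * p) :=
  calc (1 - p) * ((2 * p - 1) * x * (2 * p - 1)) * p
      = (1 - p) * (2 * p - 1) * x * ((2 * p - 1) * p) := by simp only [mul_assoc]
    _ = -((1 - p) * x * p) := by
      rw [one_sub_mul_two_mul_sub_one hp, two_mul_sub_one_mul_eq_self hp, neg_mul, neg_mul]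

theorem corner_mul_corner_eq_add (hp : IsIdempotentElem p)
    (h : v * (2 * p - 1) * u = 2 * p - 1) :
    p * v * p * (p * u * p) = p + p * v * (1 - p) * ((1 - p) * u * p) := by
  have symmetry_eq_sub : 2 * p - 1 = p * p - (1 - p) * (1 - p) := by
    rw [hp.eq, hp.one_sub.eq]; noncomm_ring
  rw [← sub_eq_iff_eq_add]
  calc p * v * p * (p * u * p) - p * v * (1 - p) * ((1 - p) * u * p)
      = p * (v * (p * p - (1 - p) * (1 - p)) * u) * p := by
        simp only [mul_sub, sub_mul, mul_assoc]
    _ = p := by rw [← symmetry_eq_sub, h, mul_assoc, two_mul_sub_one_mul_eq_self hp, hp.eq]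

theorem unitizedCorner_mul_unitizedCorner_eq_one_add (hp : IsIdempotentElem p)
    (h : v * (2 * p - 1) * u = 2 * p - 1) :
    unitizedCorner p v * unitizedCorner p u =
      1 + p * v * (1 - p) * ((1 - p) * u * p) := by
  rw [unitizedCorner_mul_unitizedCorner hp, corner_mul_corner_eq_add hp h, add_right_comm,
    add_sub_cancel]

theorem star_unitizedCorner_mul_self [StarRing R] (hp : IsStarProjection p)
    (h : star u * (2 * p - 1) * u = 2 * p - 1) :
    star (unitizedCorner p u) * unitizedCorner p u =
      1 + star ((1 - p) * u * p) * ((1 - p) * u * p) := by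
  rw [star_unitizedCorner hp.isSelfAdjoint, star_one_sub_mul_mul hp.isSelfAdjoint]
  exact unitizedCorner_mul_unitizedCorner_eq_one_add hp.isIdempotentElem h

end Ring

section CStarAlgebra

variable {A : Type*} [CStarAlgebra A]

theorem norm_one_add_of_nonneg [PartialOrder A] [StarOrderedRing A] [Nontrivial A] {a : A}
    (ha : 0 ≤ a) : ‖1 + a‖ = 1 + ‖a‖ := by
  apply le_antisymm
  · simpa only [norm_one] using norm_add_le 1 a
  · have mem_spectrum : 1 + ‖a‖ ∈ spectrum ℝ (1 + a) := by
      rw [add_comm 1 ‖a‖, ← map_one (algebraMap ℝ A), spectrum.add_mem_add_iff]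
      exact CStarAlgebra.norm_mem_spectrum_of_nonneg ha
    exact (le_abs_self _).trans (spectrum.norm_le_norm_of_mem mem_spectrum)

theorem norm_one_add_star_mul_self [Nontrivial A] (x : A) :
    ‖1 + star x * x‖ = 1 + ‖x‖ * ‖x‖ := by
  let _ := CStarAlgebra.spectralOrder A
  let _ := CStarAlgebra.spectralOrderedRing A
  rw [norm_one_add_of_nonneg (star_mul_self_nonneg x), CStarRing.norm_star_mul_self]

theorem norm_eq_norm_of_star_mul_self_eq_one_add {t x y : A}
    (hx : star t * t = 1 + star x * x) (hy : t * star t = 1 + star y * y) : ‖x‖ = ‖y‖ := by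
  nontriviality A
  have norm_sq_eq : 1 + ‖x‖ * ‖x‖ = 1 + ‖y‖ * ‖y‖ :=
    calc 1 + ‖x‖ * ‖x‖ = ‖star t * t‖ := by rw [hx, norm_one_add_star_mul_self]
      _ = ‖t * star t‖ := by rw [CStarRing.norm_star_mul_self, CStarRing.norm_self_mul_star]
      _ = 1 + ‖y‖ * ‖y‖ := by rw [hy, norm_one_add_star_mul_self]
  exact (mul_self_inj (norm_nonneg x) (norm_nonneg y)).1 (add_left_cancel norm_sq_eq)

theorem norm_one_sub_mul_mul_eq_norm_star {p u : A} (hp : IsStarProjection p)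
    (h : star u * (2 * p - 1) * u = 2 * p - 1) (h_star : u * (2 * p - 1) * star u = 2 * p - 1) :
    ‖(1 - p) * u * p‖ = ‖(1 - p) * star u * p‖ := by
  refine norm_eq_norm_of_star_mul_self_eq_one_add (star_unitizedCorner_mul_self hp h) ?_
  have star_case := star_unitizedCorner_mul_self hp (u := star u) (by rwa [star_star])
  rwa [← star_unitizedCorner hp.isSelfAdjoint, star_star] at star_case

end CStarAlgebra

/-- if `u` is `ε`-unitary then `‖(1−p)up‖ = ‖(1−p)u⁻¹p‖ = ‖(1−p)u*p‖`. -/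
theorem stmt_13 {A : Type*} [CStarAlgebra A]
    (p : A) (hp_star : p = star p) (hp_idem : p * p = p)
    (u : A) (hu : IsUnit u) (hue : star u * (2 * p - 1) * u = 2 * p - 1) :
    ‖(1 - p) * u * p‖ = ‖(1 - p) * Ring.inverse u * p‖ ∧
    ‖(1 - p) * u * p‖ = ‖(1 - p) * star u * p‖ := by
  have hp : IsStarProjection p := ⟨hp_idem, hp_star.symm⟩
  have symmetry_sq : (2 * p - 1) * (2 * p - 1) = 1 := two_mul_sub_one_mul_self_eq_one hp_idem
  have hue_star : u * (2 * p - 1) * star u = 2 * p - 1 :=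
    mul_mul_eq_of_mul_mul_eq symmetry_sq hu hue
  have norm_eq_star := norm_one_sub_mul_mul_eq_norm_star hp hue hue_star
  refine ⟨?_, norm_eq_star⟩
  rw [norm_eq_star, ringInverse_eq_of_mul_mul_eq symmetry_sq hu hue, one_sub_mul_conj_mul hp_idem,
    norm_neg]
end

section
/- Let u ∈ A be ε-unitary, i.e. u is invertible and u*εu = ε, where ε = 2p − 1. Then (uu*)^{1/2} is a positive ε-unitary, and there exists a unitary w of the corner algebra pAp (w ∈ pAp with w*w = ww* = p) such that u p w = (uu*)^{1/2} p. (Hence [up] = [(uu*)^{1/2} p] in the projective space, i.e. every point of the disc D⁺ has a positive ε-unitary representative.) -/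
/-!
Conjugation by the self-adjoint symmetry `ε = 2p - 1` inverts the positive `ε`-unitary `u u*`, hence
also its square root `s = (u u*)^{1/2}`, because square roots are compatible with unitary
conjugation and with inversion. The polar unitary `v = u⁻¹ s` can also be written `u* s⁻¹`.
Conjugation by `ε` exchanges `u⁻¹` with `u*` and `s` with `s⁻¹`, so `v` commutes with `ε`, hence
with `p`, and `w = v p` is the required unitary of the corner.
-/

open scoped Ring

/-- An `ε`-unitary: an invertible element preserving the sesquilinear form `star x * ε * y`. -/
structure IsEpsilonUnitary {R : Type*} [Monoid R] [Star R] (ε u : R) : Prop where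
  isUnit : IsUnit u
  star_mul_mul_self : star u * ε * u = ε

namespace IsEpsilonUnitary

protected theorem mul {R : Type*} [Monoid R] [StarMul R] {ε u v : R} (hu : IsEpsilonUnitary ε u)
    (hv : IsEpsilonUnitary ε v) : IsEpsilonUnitary ε (u * v) where
  isUnit := hu.isUnit.mul hv.isUnit
  star_mul_mul_self := by
    calc star (u * v) * ε * (u * v) = star v * (star u * ε * u) * v := by
          simp only [star_mul, mul_assoc]
      _ = ε := by rw [hu.star_mul_mul_self, hv.star_mul_mul_self]

theorem ringInverse_eq {R : Type*} [MonoidWithZero R] [Star R] {ε u : R}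
    (hu : IsEpsilonUnitary ε u) (hε : ε * ε = 1) : u⁻¹ʳ = ε * star u * ε := by
  have left_inverse : ε * star u * ε * u = 1 := by
    simpa only [mul_assoc, hε] using congrArg (ε * ·) hu.star_mul_mul_self
  rw [← one_mul u⁻¹ʳ]
  exact ((Ring.eq_mul_inverse_iff_mul_eq _ _ _ hu.isUnit).2 left_inverse).symm

protected theorem star {R : Type*} [MonoidWithZero R] [StarMul R] {ε u : R}
    (hu : IsEpsilonUnitary ε u) (hε : ε * ε = 1) : IsEpsilonUnitary ε (star u) where
  isUnit := hu.isUnit.star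
  star_mul_mul_self := by
    calc star (star u) * ε * star u
      _ = u * (ε * star u * ε) * ε := by simp only [star_star, mul_assoc, hε, mul_one]
      _ = ε := by rw [← hu.ringInverse_eq hε, Ring.mul_inverse_cancel _ hu.isUnit, one_mul]

end IsEpsilonUnitary

/-- A unitary of the corner algebra `p R p`, whose unit is `p`. The elements of the corner are
encoded as the `w` in `R` with `w = p * w * p`. -/
structure IsCornerUnitary {R : Type*} [Mul R] [Star R] (p w : R) : Prop where
  mem_corner : w = p * w * p
  star_mul_self : star w * w = p
  mul_star_self : w * star w = p

theorem IsCornerUnitary.of_commute {R : Type*} [Monoid R] [StarMul R] {p v : R}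
    (hp : IsStarProjection p) (hv : v ∈ unitary R) (hpv : Commute p v) :
    IsCornerUnitary p (v * p) where
  mem_corner := by
    rw [← mul_assoc, hpv.eq, mul_assoc, mul_assoc, hp.isIdempotentElem.eq, hp.isIdempotentElem.eq]
  star_mul_self := by
    calc star (v * p) * (v * p) = p * (star v * v) * p := by
          rw [star_mul, hp.isSelfAdjoint.star_eq]; simp only [mul_assoc]
      _ = p := by rw [Unitary.star_mul_self_of_mem hv, mul_one, hp.isIdempotentElem.eq]
  mul_star_self := by
    calc v * p * star (v * p) = v * (p * p) * star v := by
          rw [star_mul, hp.isSelfAdjoint.star_eq]; simp only [mul_assoc]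
      _ = p * (v * star v) := by rw [hp.isIdempotentElem.eq, ← hpv.eq, mul_assoc]
      _ = p := by rw [Unitary.mul_star_self_of_mem hv, mul_one]

theorem commute_two_mul_sub_one_left_iff {R : Type*} [Ring R] [IsAddTorsionFree R] {a b : R} :
    Commute (2 * a - 1) b ↔ Commute a b := by
  rw [commute_iff_eq, commute_iff_eq, sub_mul, mul_sub, one_mul, mul_one, sub_left_inj, two_mul,
    add_mul, mul_add, ← two_nsmul, ← two_nsmul]
  exact (nsmul_right_injective two_ne_zero).eq_iff

section ContinuousFunctionalCalculus

variable {A : Type*} [Ring A] [StarRing A] [TopologicalSpace A]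
  [PartialOrder A] [StarOrderedRing A] [Algebra ℝ A]
  [ContinuousFunctionalCalculus ℝ A IsSelfAdjoint] [NonnegSpectrumClass ℝ A]

/-- The adjoint of the unitary factor in the polar decomposition `u = (u u*)^{1/2} v*` of an
invertible element `u`. For `u` not invertible it is zero. -/
noncomputable def polarUnitary (u : A) : A := u⁻¹ʳ * CFC.sqrt (u * star u)

theorem mul_polarUnitary {u : A} (hu : IsUnit u) :
    u * polarUnitary u = CFC.sqrt (u * star u) :=
  Ring.mul_inverse_cancel_left u _ hu

variable [IsSemitopologicalRing A] [T2Space A]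

theorem cfcSqrt_star_left_conjugate {a v : A} (ha : 0 ≤ a) (hv : v * star v = 1) :
    CFC.sqrt (star v * a * v) = star v * CFC.sqrt a * v := by
  refine CFC.sqrt_unique ?_ (star_left_conjugate_nonneg (CFC.sqrt_nonneg a) v)
  calc star v * CFC.sqrt a * v * (star v * CFC.sqrt a * v)
      = star v * CFC.sqrt a * (v * star v) * CFC.sqrt a * v := by simp only [mul_assoc]
    _ = star v * (CFC.sqrt a * CFC.sqrt a) * v := by rw [hv, mul_one, mul_assoc (star v)]
    _ = star v * a * v := by rw [CFC.sqrt_mul_sqrt_self a]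

theorem isUnit_cfcSqrt_mul_star_self {u : A} (hu : IsUnit u) :
    IsUnit (CFC.sqrt (u * star u)) :=
  (CFC.isUnit_sqrt_iff _ (mul_star_self_nonneg u)).2 (hu.mul hu.star)

theorem IsEpsilonUnitary.ringInverse_cfcSqrt {ε a : A} (ha : IsEpsilonUnitary ε a)
    (ha₀ : 0 ≤ a) (hε : IsSelfAdjoint ε) (hεε : ε * ε = 1) :
    (CFC.sqrt a)⁻¹ʳ = ε * CFC.sqrt a * ε := by
  calc (CFC.sqrt a)⁻¹ʳ = CFC.sqrt a⁻¹ʳ := CFC.sqrt_ringInverse.symm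
    _ = CFC.sqrt (star ε * a * ε) := by
      rw [ha.ringInverse_eq hεε, ha₀.isSelfAdjoint.star_eq, hε.star_eq]
    _ = ε * CFC.sqrt a * ε := by
      rw [cfcSqrt_star_left_conjugate ha₀ (by rw [hε.star_eq, hεε]), hε.star_eq]

theorem polarUnitary_eq_star_mul_ringInverse {u : A} (hu : IsUnit u) :
    polarUnitary u = star u * (CFC.sqrt (u * star u))⁻¹ʳ := by
  rw [Ring.eq_mul_inverse_iff_mul_eq _ _ _ (isUnit_cfcSqrt_mul_star_self hu), polarUnitary,
    mul_assoc, CFC.sqrt_mul_sqrt_self _ (mul_star_self_nonneg u),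
    Ring.inverse_mul_cancel_left _ _ hu]

theorem polarUnitary_mem_unitary {u : A} (hu : IsUnit u) : polarUnitary u ∈ unitary A := by
  have hs := isUnit_cfcSqrt_mul_star_self hu
  have isUnit_polar : IsUnit (polarUnitary u) := hu.ringInverse.mul hs
  rw [isUnit_polar.mem_unitary_iff_star_mul_self]
  calc star (polarUnitary u) * polarUnitary u
      = (CFC.sqrt (u * star u))⁻¹ʳ * (u * polarUnitary u) := by
        nth_rw 1 [polarUnitary_eq_star_mul_ringInverse hu]
        rw [star_mul, star_star, ← Ring.inverse_star,
          (CFC.sqrt_nonneg _).isSelfAdjoint.star_eq, mul_assoc]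
    _ = 1 := by rw [mul_polarUnitary hu, Ring.inverse_mul_cancel _ hs]

theorem IsEpsilonUnitary.ringInverse_cfcSqrt_mul_star_self {ε u : A} (hu : IsEpsilonUnitary ε u)
    (hε : IsSelfAdjoint ε) (hεε : ε * ε = 1) :
    (CFC.sqrt (u * star u))⁻¹ʳ = ε * CFC.sqrt (u * star u) * ε :=
  (hu.mul (hu.star hεε)).ringInverse_cfcSqrt (mul_star_self_nonneg u) hε hεε

theorem IsEpsilonUnitary.commute_polarUnitary {ε u : A} (hu : IsEpsilonUnitary ε u)
    (hε : IsSelfAdjoint ε) (hεε : ε * ε = 1) : Commute ε (polarUnitary u) := by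
  calc ε * polarUnitary u = ε * (ε * star u * ε * CFC.sqrt (u * star u)) := by
        rw [polarUnitary, hu.ringInverse_eq hεε]
    _ = ε * ε * star u * (ε * CFC.sqrt (u * star u)) := by simp only [mul_assoc]
    _ = star u * (ε * CFC.sqrt (u * star u) * ε) * ε := by
        simp only [mul_assoc, hεε, one_mul, mul_one]
    _ = polarUnitary u * ε := by
        rw [← hu.ringInverse_cfcSqrt_mul_star_self hε hεε,
          ← polarUnitary_eq_star_mul_ringInverse hu.isUnit]

theorem stmt_14_general (p : A) (hp_star : p = star p) (hp_idem : p * p = p)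
    (u : A) (hu : IsUnit u) (hue : star u * (2 * p - 1) * u = 2 * p - 1) :
    (0 ≤ CFC.sqrt (u * star u) ∧ IsUnit (CFC.sqrt (u * star u)) ∧
      (2 * p - 1) * CFC.sqrt (u * star u) * (2 * p - 1) = Ring.inverse (CFC.sqrt (u * star u))) ∧
    ∃ w : A, w = p * w * p ∧ star w * w = p ∧ w * star w = p ∧
      u * p * w = CFC.sqrt (u * star u) * p := by
  have hp : IsStarProjection p := ⟨hp_idem, hp_star.symm⟩
  have hε : IsSelfAdjoint (2 * p - 1) := by
    simp only [two_mul, IsSelfAdjoint, star_sub, star_add, star_one, ← hp_star]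
  have hεε : (2 * p - 1) * (2 * p - 1) = 1 := by
    simpa only [hε.star_eq] using Unitary.star_mul_self_of_mem hp.two_mul_sub_one_mem_unitary
  have hεu : IsEpsilonUnitary (2 * p - 1) u := ⟨hu, hue⟩
  have : IsAddTorsionFree A := .of_isTorsionFree ℝ A
  have hpv : Commute p (polarUnitary u) :=
    commute_two_mul_sub_one_left_iff.1 (hεu.commute_polarUnitary hε hεε)
  have hw := IsCornerUnitary.of_commute hp (polarUnitary_mem_unitary hu) hpv
  refine ⟨⟨CFC.sqrt_nonneg _, isUnit_cfcSqrt_mul_star_self hu,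
    (hεu.ringInverse_cfcSqrt_mul_star_self hε hεε).symm⟩,
    polarUnitary u * p, hw.mem_corner, hw.star_mul_self, hw.mul_star_self, ?_⟩
  calc u * p * (polarUnitary u * p) = u * (p * polarUnitary u) * p := by simp only [mul_assoc]
    _ = CFC.sqrt (u * star u) * p := by
      rw [hpv.eq, ← mul_assoc u, mul_polarUnitary hu, mul_assoc, hp_idem]

end ContinuousFunctionalCalculus

/-- if `u` is `ε`-unitary then `(uu*)^{1/2}` is a positive `ε`-unitary and there
is a unitary `w` of `pAp` with `u p w = (uu*)^{1/2} p`. -/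
theorem stmt_14 {A : Type*} [CStarAlgebra A] [PartialOrder A] [StarOrderedRing A]
    (p : A) (hp_star : p = star p) (hp_idem : p * p = p)
    (u : A) (hu : IsUnit u) (hue : star u * (2 * p - 1) * u = 2 * p - 1) :
    (0 ≤ CFC.sqrt (u * star u) ∧ IsUnit (CFC.sqrt (u * star u)) ∧
      (2 * p - 1) * CFC.sqrt (u * star u) * (2 * p - 1) = Ring.inverse (CFC.sqrt (u * star u))) ∧
    ∃ w : A, w = p * w * p ∧ star w * w = p ∧ w * star w = p ∧
      u * p * w = CFC.sqrt (u * star u) * p :=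
  stmt_14_general p hp_star hp_idem u hu hue
end

section
/- Let λ ∈ A be a positive invertible element with ελε = λ^{-1}, where ε = 2p − 1. Then ‖(1−p)λp‖ = sinh(‖log λ‖), where log λ is defined by continuous functional calculus. -/
/-!
Write `λ` for `lam` and `ε` for `2p - 1`. Both sides of the identity compute the norm of the
self-adjoint element `S = (λ - λ⁻¹) / 2`. By functional calculus `S = sinh (log λ)`, and `sinh` is
odd and increasing, so `‖S‖ = sinh ‖log λ‖`. On the other hand `S = (λ - ελε) / 2` is the
off-diagonal part `b + b*` of `λ` relative to `p`, where `b = (1 - p)λp`. As `b² = 0`, the positive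
elements `b*b` and `bb*` are orthogonal with sum `S²`, whence `‖S‖ = ‖b‖`.
-/

theorem norm_add_star_of_mul_self_eq_zero {A : Type*} [NonUnitalCStarAlgebra A] {b : A}
    (hb : b * b = 0) : ‖b + star b‖ = ‖b‖ := by
  have hb_star : star b * star b = 0 := by rw [← star_mul, hb, star_zero]
  have orthogonal : (star b * b) * (b * star b) = 0 := by
    rw [mul_assoc, ← mul_assoc b, hb, zero_mul, mul_zero]
  have star_mul_self_add : star (b + star b) * (b + star b) = star b * b + b * star b := by
    simp only [star_add, star_star, add_mul, mul_add, hb, hb_star, zero_add, add_zero]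
  rw [← mul_self_inj (norm_nonneg _) (norm_nonneg _)]
  calc ‖b + star b‖ * ‖b + star b‖ = ‖star b * b + b * star b‖ := by
        rw [← CStarRing.norm_star_mul_self, star_mul_self_add]
    _ = max ‖star b * b‖ ‖b * star b‖ :=
        (IsSelfAdjoint.star_mul_self b).norm_add_eq_max (.mul_star_self b) orthogonal
    _ = ‖b‖ * ‖b‖ := by
        rw [CStarRing.norm_star_mul_self, CStarRing.norm_self_mul_star, max_self]

theorem norm_mul_mul_add_swap {A : Type*} [NonUnitalCStarAlgebra A] {p q a : A}
    (hp : IsSelfAdjoint p) (hq : IsSelfAdjoint q) (ha : IsSelfAdjoint a) (hpq : p * q = 0) :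
    ‖q * a * p + p * a * q‖ = ‖q * a * p‖ := by
  have star_corner : star (q * a * p) = p * a * q := by
    rw [star_mul, star_mul, hp.star_eq, hq.star_eq, ha.star_eq, mul_assoc]
  have corner_sq : q * a * p * (q * a * p) = 0 :=
    calc q * a * p * (q * a * p) = q * a * (p * q) * (a * p) := by simp only [mul_assoc]
      _ = 0 := by rw [hpq, mul_zero, zero_mul]
  rw [← star_corner, norm_add_star_of_mul_self_eq_zero corner_sq]

theorem sub_two_mul_sub_one_conj {R : Type*} [Ring R] (p a : R) :
    a - (2 * p - 1) * a * (2 * p - 1) = 2 * ((1 - p) * a * p + p * a * (1 - p)) := by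
  noncomm_ring

theorem norm_cfcₙ_eq_of_norm_apply_eq {𝕜 A : Type*} {P : A → Prop} [RCLike 𝕜]
    [NonUnitalNormedRing A] [StarRing A] [NormedSpace 𝕜 A] [IsScalarTower 𝕜 A A]
    [SMulCommClass 𝕜 A A] [NonUnitalIsometricContinuousFunctionalCalculus 𝕜 A P]
    {f : 𝕜 → 𝕜} {g : ℝ → ℝ} {a : A} (hg : MonotoneOn g (Set.Ici 0))
    (hfg : ∀ x ∈ quasispectrum 𝕜 a, ‖f x‖ = g ‖x‖)
    (hf : ContinuousOn f (quasispectrum 𝕜 a) := by cfc_cont_tac)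
    (hf₀ : f 0 = 0 := by cfc_zero_tac) (ha : P a := by cfc_tac) :
    ‖cfcₙ f a‖ = g ‖a‖ := by
  have norm_nonneg_of_mem : (‖·‖) '' quasispectrum 𝕜 a ⊆ Set.Ici 0 := by
    rintro _ ⟨x, -, rfl⟩
    exact norm_nonneg x
  have greatest := (hg.mono norm_nonneg_of_mem).map_isGreatest
    (NonUnitalIsometricContinuousFunctionalCalculus.isGreatest_norm_quasispectrum a)
  rw [Set.image_image, ← Set.image_congr hfg] at greatest
  exact (IsGreatest.norm_cfcₙ f a).unique greatest

theorem norm_cfcₙ_sinh {A : Type*} [NonUnitalNormedRing A] [StarRing A] [NormedSpace ℝ A]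
    [IsScalarTower ℝ A A] [SMulCommClass ℝ A A]
    [NonUnitalIsometricContinuousFunctionalCalculus ℝ A IsSelfAdjoint]
    {a : A} (ha : IsSelfAdjoint a) : ‖cfcₙ Real.sinh a‖ = Real.sinh ‖a‖ :=
  norm_cfcₙ_eq_of_norm_apply_eq (Real.sinh_strictMono.monotone.monotoneOn _)
    (fun x _ ↦ Real.abs_sinh x) Real.continuous_sinh.continuousOn Real.sinh_zero

theorem cfc_sinh_log {A : Type*} [NormedRing A] [StarRing A] [NormedAlgebra ℝ A]
    [ContinuousFunctionalCalculus ℝ A IsSelfAdjoint] [PartialOrder A] [StarOrderedRing A]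
    [NonnegSpectrumClass ℝ A] {a : A} (ha : IsStrictlyPositive a) :
    cfc Real.sinh (CFC.log a) = (2⁻¹ : ℝ) • (a - Ring.inverse a) := by
  have spectrum_ne_zero : ∀ x ∈ spectrum ℝ a, x ≠ 0 := fun x hx ↦ (ha.spectrum_pos hx).ne'
  have hlog : ContinuousOn Real.log (spectrum ℝ a) := Real.continuousOn_log.mono spectrum_ne_zero
  have hinv : ContinuousOn (·⁻¹) (spectrum ℝ a) := continuousOn_inv₀.mono spectrum_ne_zero
  calc cfc Real.sinh (CFC.log a) = cfc (fun x ↦ Real.sinh (Real.log x)) a := by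
        rw [CFC.log, ← cfc_comp' Real.sinh Real.log a]
    _ = cfc (fun x : ℝ ↦ (2⁻¹ : ℝ) • (x - x⁻¹)) a := cfc_congr fun x hx ↦ by
        simp only [Real.sinh_log (ha.spectrum_pos hx), smul_eq_mul, div_eq_inv_mul]
    _ = (2⁻¹ : ℝ) • (a - Ring.inverse a) := by
        rw [cfc_smul _ _ a, cfc_sub _ _ a, cfc_id' ℝ a, cfc_ringInverse_id a ha.isUnit]

theorem norm_half_smul_sub_inverse {A : Type*} [NormedRing A] [StarRing A] [NormedAlgebra ℝ A]
    [IsometricContinuousFunctionalCalculus ℝ A IsSelfAdjoint] [PartialOrder A] [StarOrderedRing A]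
    [NonnegSpectrumClass ℝ A] {a : A} (ha : IsStrictlyPositive a) :
    ‖(2⁻¹ : ℝ) • (a - Ring.inverse a)‖ = Real.sinh ‖CFC.log a‖ := by
  rw [← cfc_sinh_log ha, ← cfcₙ_eq_cfc, norm_cfcₙ_sinh .log]

/-- for a positive `ε`-unitary `λ`, `‖(1−p)λp‖ = sinh ‖log λ‖`. -/
theorem stmt_19 {A : Type*} [CStarAlgebra A] [PartialOrder A] [StarOrderedRing A]
    (p : A) (hp_star : p = star p) (hp_idem : p * p = p)
    (lam : A) (hl_pos : 0 ≤ lam) (hl_u : IsUnit lam)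
    (hl_eps : (2 * p - 1) * lam * (2 * p - 1) = Ring.inverse lam) :
    ‖(1 - p) * lam * p‖ = Real.sinh ‖CFC.log lam‖ := by
  have p_mul_compl : p * (1 - p) = 0 := IsIdempotentElem.mul_one_sub_self hp_idem
  have hp : IsSelfAdjoint p := hp_star.symm
  have off_diagonal : (1 - p) * lam * p + p * lam * (1 - p)
      = (2⁻¹ : ℝ) • (lam - Ring.inverse lam) := by
    rw [← hl_eps, sub_two_mul_sub_one_conj, two_mul, ← two_smul ℝ, inv_smul_smul₀ two_ne_zero]
  calc ‖(1 - p) * lam * p‖ = ‖(1 - p) * lam * p + p * lam * (1 - p)‖ :=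
        (norm_mul_mul_add_swap hp (.sub (.one A) hp) hl_pos.isSelfAdjoint p_mul_compl).symm
    _ = Real.sinh ‖CFC.log lam‖ := by
        rw [off_diagonal, norm_half_smul_sub_inverse (hl_u.isStrictlyPositive hl_pos)]
end
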